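/- arXiv:2603.27559 — 11 statements merged into one kernel-verified Lean document; each statement's English description precedes it below -/
import Mathlib

section
/- Let V and W be finite vertex types, and let G be a simple graph on V and H a simple graph on W. Then G and H are TF-isomorphic if and only if their canonical double covers CDC(G) and CDC(H) are isomorphic as simple graphs (i.e., there exists a graph isomorphism between CDC(G) and CDC(H)). -/
/-- The canonical double cover of a simple graph `G`:
vertices `V × Bool`, with `(u,i) ~ (v,j)` iff `u ~ v` in `G` and `i ≠ j`. -/
def CDC {V : Type*} (G : SimpleGraph V) : SimpleGraph (V × Bool) where
  Adj x y := G.Adj x.1 y.1 ∧ x.2 ≠ y.2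
  symm := ⟨fun _ _ h => ⟨h.1.symm, h.2.symm⟩⟩
  loopless := ⟨fun _ h => h.2 rfl⟩

/-!
An isomorphism `φ : CDC G ≃g CDC H` need not map sheets to sheets, but on each connected component
of `CDC G` it either preserves or reverses them, since a connected graph has only two
`2`-colorings. Thus `CDC G` carries two `2`-colorings `c` and `d`, its own sheets and those pulled
back from `CDC H`, which agree up to reversal on each component, and each of which is reversed by
some automorphism. Let `t` be an isomorphism type of `2`-colored components other than its reversal
`t'`. The components of type `t` or `t'` are the same for `c` and for `d`, and both times the two
types are equally frequent, because of the reversing automorphisms. Halving determines a cardinal,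
so `t` is equally frequent for `c` and `d`. Matching components of equal type gives an automorphism
carrying `c` to `d`, hence an isomorphism `CDC G ≃g CDC H` which preserves the sheets; its two
restrictions to sheets form a TF-isomorphism.
-/

open Function SimpleGraph

section Matching

open Cardinal

theorem cardinal_eq_of_add_self_eq {a b : Cardinal} (h : a + a = b + b) : a = b := by
  rcases lt_or_ge a ℵ₀ with ha | ha
  · have hb : b < ℵ₀ := (self_le_add_left b b).trans_lt (h ▸ add_lt_aleph0 ha ha)
    lift a to ℕ using ha
    lift b to ℕ using hb
    norm_cast at h ⊢
    lia
  · have hb : ℵ₀ ≤ b := by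
      by_contra! hb
      exact ((self_le_add_left a a).trans_lt (h ▸ add_lt_aleph0 hb hb)).not_ge ha
    rwa [add_eq_self ha, add_eq_self hb] at h

variable {K T : Type*} {f g : K → T} {s : T → T}

theorem mk_preimage_apply_eq (hs : Injective s) (σ : Equiv.Perm K)
    (hσ : ∀ x, f (σ x) = s (f x)) (t : T) : #(f ⁻¹' {s t}) = #(f ⁻¹' {t}) :=
  (mk_congr (σ.subtypeEquiv fun x => by
    simp only [Set.mem_preimage, Set.mem_singleton_iff, hσ, hs.eq_iff])).symm

theorem exists_perm_of_eq_or_eq_involutive (hs : Involutive s) (σ τ : Equiv.Perm K)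
    (hσ : ∀ x, f (σ x) = s (f x)) (hτ : ∀ x, g (τ x) = s (g x))
    (hfg : ∀ x, g x = f x ∨ g x = s (f x)) : ∃ ψ : Equiv.Perm K, ∀ x, g (ψ x) = f x := by
  have pair_eq (t : T) : f ⁻¹' {t} ∪ f ⁻¹' {s t} = g ⁻¹' {t} ∪ g ⁻¹' {s t} := by
    ext x
    simp only [Set.mem_union, Set.mem_preimage, Set.mem_singleton_iff]
    rcases hfg x with h | h
    · rw [h]
    · rw [h, hs.eq_iff, hs.injective.eq_iff, or_comm]
  have mk_eq (t : T) : #(f ⁻¹' {t}) = #(g ⁻¹' {t}) := by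
    rcases eq_or_ne (s t) t with ht | ht
    · have fibers_eq := pair_eq t
      rw [ht, Set.union_self, Set.union_self] at fibers_eq
      rw [fibers_eq]
    · have disj (h : K → T) : Disjoint (h ⁻¹' {t}) (h ⁻¹' {s t}) :=
        (Set.disjoint_singleton.2 ht.symm).preimage h
      apply cardinal_eq_of_add_self_eq
      calc #(f ⁻¹' {t}) + #(f ⁻¹' {t})
          = #↑(f ⁻¹' {t} ∪ f ⁻¹' {s t}) := by
            rw [mk_union_of_disjoint (disj f), mk_preimage_apply_eq hs.injective σ hσ]
        _ = #↑(g ⁻¹' {t} ∪ g ⁻¹' {s t}) := by rw [pair_eq]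
        _ = #(g ⁻¹' {t}) + #(g ⁻¹' {t}) := by
            rw [mk_union_of_disjoint (disj g), mk_preimage_apply_eq hs.injective τ hτ]
  let e (t : T) : f ⁻¹' {t} ≃ g ⁻¹' {t} := (Cardinal.eq.1 (mk_eq t)).some
  exact ⟨Equiv.ofFiberEquiv e, Equiv.ofFiberEquiv_map e⟩

end Matching

section Components

variable {V W : Type*} {G : SimpleGraph V} {H : SimpleGraph W}

/-- The restriction of a graph isomorphism to a connected component. -/
def componentIso (φ : G ≃g H) (C : G.ConnectedComponent) :
    C.toSimpleGraph ≃g (φ.connectedComponentEquiv C).toSimpleGraph where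
  toEquiv := ConnectedComponent.isoEquivSupp φ C
  map_rel_iff' := φ.map_adj_iff

variable (ψ : G.ConnectedComponent ≃ H.ConnectedComponent)
  (e : ∀ C, C.toSimpleGraph ≃g (ψ C).toSimpleGraph)

/-- The bijection of vertices glued from isomorphisms between matched connected components. -/
def equivOfComponents : V ≃ W :=
  (Equiv.sigmaFiberEquiv G.connectedComponentMk).symm.trans <|
    (Equiv.sigmaCongr ψ fun C => (e C).toEquiv).trans (Equiv.sigmaFiberEquiv H.connectedComponentMk)

theorem equivOfComponents_apply {C : G.ConnectedComponent} (x : C) :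
    equivOfComponents ψ e x = e C x := by
  obtain ⟨x, rfl⟩ := x
  rfl

theorem connectedComponentMk_equivOfComponents (x : V) :
    H.connectedComponentMk (equivOfComponents ψ e x) = ψ (G.connectedComponentMk x) :=
  (e _ ⟨x, rfl⟩).2

/-- The isomorphism of graphs glued from isomorphisms between matched connected components. -/
def isoOfComponents : G ≃g H where
  toEquiv := equivOfComponents ψ e
  map_rel_iff' := by
    intro x y
    by_cases hxy : G.connectedComponentMk x = G.connectedComponentMk y
    · let x' : G.connectedComponentMk y := ⟨x, hxy⟩
      let y' : G.connectedComponentMk y := ⟨y, rfl⟩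
      change H.Adj (equivOfComponents ψ e x') (equivOfComponents ψ e y') ↔ _
      rw [equivOfComponents_apply, equivOfComponents_apply]
      exact (e _).map_adj_iff
    · refine iff_of_false (fun h => hxy ?_) fun h =>
        hxy (ConnectedComponent.connectedComponentMk_eq_of_adj h)
      simpa only [connectedComponentMk_equivOfComponents, ψ.apply_eq_iff_eq] using
        ConnectedComponent.connectedComponentMk_eq_of_adj h

end Components

section ColoredComponents

variable {V : Type*} {G : SimpleGraph V} {α : Type*}

/-- Color-preserving isomorphism of colored connected components. The coloring, which need not
be proper, is recorded on all of `V`, although only its values on the component matter. -/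
def coloredComponentSetoid (G : SimpleGraph V) (α : Type*) :
    Setoid ((V → α) × G.ConnectedComponent) where
  r p q := ∃ e : p.2.toSimpleGraph ≃g q.2.toSimpleGraph, ∀ x, q.1 (e x) = p.1 x
  iseqv :=
    { refl := fun _ => ⟨Iso.refl, fun _ => rfl⟩
      symm := fun ⟨e, he⟩ => ⟨e.symm, fun x => by rw [← he, e.apply_symm_apply]⟩
      trans := fun ⟨e, he⟩ ⟨e', he'⟩ => ⟨e.trans e', fun x => (he' (e x)).trans (he x)⟩ }

/-- Isomorphism types of connected components of `G` with vertices colored by `α`, the invariant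
by which components are matched under two colorings. -/
def ColoredComponentType (G : SimpleGraph V) (α : Type*) : Type _ :=
  Quotient (coloredComponentSetoid G α)

namespace ColoredComponentType

/-- The isomorphism type of the component `C` with the coloring `c`. -/
def mk (c : V → α) (C : G.ConnectedComponent) : ColoredComponentType G α :=
  Quotient.mk (coloredComponentSetoid G α) (c, C)

theorem mk_eq_mk {c d : V → α} {C D : G.ConnectedComponent} :
    mk c C = mk d D ↔ ∃ e : C.toSimpleGraph ≃g D.toSimpleGraph, ∀ x, d (e x) = c x :=
  Quotient.eq

/-- The action of a map of colors on types of colored components. -/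
def recolor (r : α → α) : ColoredComponentType G α → ColoredComponentType G α :=
  Quotient.map (fun p => (r ∘ p.1, p.2)) fun _ _ ⟨e, he⟩ => ⟨e, fun x => congrArg r (he x)⟩

theorem recolor_mk (r : α → α) (c : V → α) (C : G.ConnectedComponent) :
    recolor r (mk c C) = mk (r ∘ c) C :=
  rfl

theorem recolor_involutive {r : α → α} (hr : Involutive r) :
    Involutive (recolor r : ColoredComponentType G α → _) := by
  rintro ⟨c, C⟩
  change mk (r ∘ r ∘ c) C = mk c C
  rw [← comp_assoc, hr.comp_self, id_comp]

theorem mk_eq_mk_of_eqOn {c d : V → α} {C : G.ConnectedComponent} (h : Set.EqOn c d C.supp) :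
    mk c C = mk d C :=
  mk_eq_mk.2 ⟨Iso.refl, fun x => (h x.2).symm⟩

theorem mk_connectedComponentEquiv (c : V → α) (φ : G ≃g G) (C : G.ConnectedComponent) :
    mk c (φ.connectedComponentEquiv C) = mk (c ∘ φ) C :=
  (mk_eq_mk.2 ⟨componentIso φ C, fun _ => rfl⟩).symm

end ColoredComponentType

end ColoredComponents

section TwoColorings

variable {V : Type*} {G : SimpleGraph V}

theorem coloring_eqOn_or_eqOn_not (c d : G.Coloring Bool) (C : G.ConnectedComponent) :
    Set.EqOn d c C.supp ∨ Set.EqOn d (not ∘ c) C.supp := by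
  induction C using ConnectedComponent.ind with | _ x₀
  have agree {x : V} (hx : x ∈ (G.connectedComponentMk x₀).supp) :
      (c x ↔ c x₀) ↔ (d x ↔ d x₀) := by
    obtain ⟨p⟩ := ConnectedComponent.exact hx
    rw [← c.even_length_iff_congr p, d.even_length_iff_congr p]
  rcases eq_or_ne (d x₀) (c x₀) with h₀ | h₀
  · exact Or.inl fun x hx => by grind [agree hx]
  · exact Or.inr fun x hx => by grind [agree hx]

open ColoredComponentType in
theorem exists_aut_of_reversible_colorings (c d : G.Coloring Bool) (σ τ : G ≃g G)
    (hσ : ∀ x, c (σ x) = !c x) (hτ : ∀ x, d (τ x) = !d x) :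
    ∃ ψ : G ≃g G, ∀ x, d (ψ x) = c x := by
  have reverse {b : V → Bool} {ρ : G ≃g G} (hρ : ∀ x, b (ρ x) = !b x)
      (C : G.ConnectedComponent) : mk b (ρ.connectedComponentEquiv C) = recolor not (mk b C) := by
    rw [mk_connectedComponentEquiv, recolor_mk, show b ∘ ρ = not ∘ b from funext hρ]
  obtain ⟨ψ, hψ⟩ := exists_perm_of_eq_or_eq_involutive (recolor_involutive Bool.not_not)
    σ.connectedComponentEquiv τ.connectedComponentEquiv (reverse hσ) (reverse hτ) fun C =>
      (coloring_eqOn_or_eqOn_not c d C).imp mk_eq_mk_of_eqOn mk_eq_mk_of_eqOn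
  choose e he using fun C => mk_eq_mk.1 (hψ C).symm
  refine ⟨isoOfComponents ψ e, fun x => ?_⟩
  let x' : G.connectedComponentMk x := ⟨x, rfl⟩
  exact (congrArg d (equivOfComponents_apply ψ e x')).trans (he _ x')

end TwoColorings

namespace CDC

variable {V W : Type*} {G : SimpleGraph V} {H : SimpleGraph W}

theorem adj_iff {x y : V × Bool} : (CDC G).Adj x y ↔ G.Adj x.1 y.1 ∧ x.2 ≠ y.2 :=
  Iff.rfl

/-- The `2`-coloring of the canonical double cover by its two sheets `V × {false}` and
`V × {true}`. -/
def sheet (G : SimpleGraph V) : (CDC G).Coloring Bool :=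
  Coloring.mk Prod.snd And.right

/-- The automorphism of the canonical double cover exchanging its two sheets. -/
def swap (G : SimpleGraph V) : CDC G ≃g CDC G where
  toEquiv := Equiv.prodCongrRight fun _ => Equiv.boolNot
  map_rel_iff' := by simp [adj_iff]

theorem exists_iso_preserving_sheets (φ : CDC G ≃g CDC H) :
    ∃ Ψ : CDC G ≃g CDC H, ∀ x, (Ψ x).2 = x.2 := by
  let d : (CDC G).Coloring Bool := (sheet H).comp φ.toHom
  obtain ⟨ψ, hψ⟩ := exists_aut_of_reversible_colorings (sheet G) d (swap G)
    ((φ.trans (swap H)).trans φ.symm) (fun _ => rfl) fun x =>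
      congrArg Prod.snd (φ.apply_symm_apply (swap H (φ x)))
  exact ⟨ψ.trans φ, hψ⟩

/-- The bijection of base vertices which a sheet-preserving isomorphism induces on one sheet. -/
def sheetEquiv (Ψ : CDC G ≃g CDC H) (hΨ : ∀ x, (Ψ x).2 = x.2) (b : Bool) : V ≃ W where
  toFun u := (Ψ (u, b)).1
  invFun w := (Ψ.symm (w, b)).1
  left_inv u := by
    dsimp only
    rw [show ((Ψ (u, b)).1, b) = Ψ (u, b) from Prod.ext rfl (hΨ (u, b)).symm, Ψ.symm_apply_apply]
  right_inv w := by
    have hw : (Ψ.symm (w, b)).2 = b := by rw [← hΨ, Ψ.apply_symm_apply]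
    dsimp only
    rw [show ((Ψ.symm (w, b)).1, b) = Ψ.symm (w, b) from Prod.ext rfl hw.symm,
      Ψ.apply_symm_apply]

theorem adj_sheetEquiv_iff (Ψ : CDC G ≃g CDC H) (hΨ : ∀ x, (Ψ x).2 = x.2) (u v : V) :
    G.Adj u v ↔ H.Adj (sheetEquiv Ψ hΨ false u) (sheetEquiv Ψ hΨ true v) := by
  have h := Ψ.map_adj_iff (v := (u, false)) (w := (v, true))
  simpa [adj_iff, hΨ, sheetEquiv] using h.symm

/-- The isomorphism of canonical double covers acting as `α` on the sheet `V × {false}` and as `β`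
on the sheet `V × {true}`. -/
def isoOfTF (α β : V ≃ W) (h : ∀ u v, G.Adj u v ↔ H.Adj (α u) (β v)) : CDC G ≃g CDC H where
  toEquiv := Equiv.prodCongrLeft fun b => cond b β α
  map_rel_iff' := by
    rintro ⟨u, _ | _⟩ ⟨v, _ | _⟩
    · simp [adj_iff]
    · simp [adj_iff, h]
    · simp [adj_iff, G.adj_comm u v, H.adj_comm (β u) (α v), h v u]
    · simp [adj_iff]

end CDC

theorem tf_isomorphic_iff_cdc_iso_general {V W : Type*} (G : SimpleGraph V) (H : SimpleGraph W) :
    (∃ α β : V ≃ W, ∀ u v : V, G.Adj u v ↔ H.Adj (α u) (β v)) ↔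
      Nonempty (CDC G ≃g CDC H) := by
  constructor
  · rintro ⟨α, β, h⟩
    exact ⟨CDC.isoOfTF α β h⟩
  · rintro ⟨φ⟩
    obtain ⟨Ψ, hΨ⟩ := CDC.exists_iso_preserving_sheets φ
    exact ⟨CDC.sheetEquiv Ψ hΨ false, CDC.sheetEquiv Ψ hΨ true, CDC.adj_sheetEquiv_iff Ψ hΨ⟩

/-- Two graphs are TF-isomorphic iff their canonical double covers are isomorphic. -/
theorem tf_isomorphic_iff_cdc_iso {V W : Type*} [Fintype V] [Fintype W]
    (G : SimpleGraph V) (H : SimpleGraph W) :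
    (∃ α β : V ≃ W, ∀ u v : V, G.Adj u v ↔ H.Adj (α u) (β v)) ↔
      Nonempty (CDC G ≃g CDC H) :=
  tf_isomorphic_iff_cdc_iso_general G H
end

section
/- Let V and W be finite vertex types, and let G be a digraph on V and H a digraph on W. Then there exist bijections α, β : V ≃ W such that for all u, v ∈ V, (u,v) is an arc of G if and only if (α(u), β(v)) is an arc of H, if and only if the alternating double covers ADC(G) and ADC(H) are isomorphic as digraphs, i.e., there exists a bijection e : V × Bool ≃ W × Bool such that for all x, y, (x,y) is an arc of ADC(G) if and only if (e(x), e(y)) is an arc of ADC(H). -/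
/-- The alternating double cover of a digraph (arbitrary relation) `r` on `V`:
arcs run from `(u, false)` to `(v, true)` exactly when `(u,v)` is an arc of `r`. -/
def ADC {V : Type*} (r : V → V → Prop) : V × Bool → V × Bool → Prop :=
  fun x y => r x.1 y.1 ∧ x.2 = false ∧ y.2 = true

/-!
In `ADC r` every arc runs from level `false` to level `true`, so an isomorphism of alternating
double covers preserves the level of each vertex that is not isolated. It therefore restricts to
injections on the non-sinks (at level `false`) and on the non-sources (at level `true`), and by
finiteness these extend to bijections `α` and `β`; the isolated vertices of the cover, which the
isomorphism may move between the two levels, are irrelevant to the arcs.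
-/

section Prod

variable {V W B : Type*} [Finite V] [Finite B]

theorem nonempty_equiv_of_prod_equiv_prod [Nonempty B] (e : V × B ≃ W × B) :
    Nonempty (V ≃ W) := by
  have : Finite (W × B) := .of_equiv _ e
  have : Finite W := .prod_left B
  have card_mul : Nat.card V * Nat.card B = Nat.card W * Nat.card B := by
    simpa only [Nat.card_prod] using Nat.card_congr e
  exact Finite.card_eq.1 (Nat.eq_of_mul_eq_mul_right Nat.card_pos card_mul)

theorem exists_equiv_extending_on_fiber (e : V × B ≃ W × B) {b : B} {S : Set V}
    (hS : ∀ u ∈ S, (e (u, b)).2 = b) : ∃ f : V ≃ W, ∀ u ∈ S, e (u, b) = (f u, b) := by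
  have injOn_fst : S.InjOn fun u => (e (u, b)).1 := fun u hu u' hu' h =>
    congrArg Prod.fst (e.injective (Prod.ext h ((hS u hu).trans (hS u' hu').symm)))
  have : Nonempty B := ⟨b⟩
  obtain ⟨f, hf⟩ := Cardinal.extend_function_finite ⟨_, injOn_fst.injective⟩
    (nonempty_equiv_of_prod_equiv_prod e)
  exact ⟨f, fun u hu => Prod.ext (hf ⟨u, hu⟩).symm (hS u hu)⟩

end Prod

section DoubleCover

variable {V W : Type*} {r : V → V → Prop} {s : W → W → Prop}

/-- The pair `(α, β)` is a TF-isomorphism ("two-fold isomorphism") from `r` to `s`: `α` acts on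
the tails of arcs and `β` on their heads. -/
def IsTFIso (r : V → V → Prop) (s : W → W → Prop) (α β : V ≃ W) : Prop :=
  ∀ u v, r u v ↔ s (α u) (β v)

/-- The isomorphism of alternating double covers induced by a TF-isomorphism `(α, β)`, acting as
`α` on level `false` and as `β` on level `true`. -/
def IsTFIso.adcRelIso {α β : V ≃ W} (h : IsTFIso r s α β) : ADC r ≃r ADC s where
  toEquiv := Equiv.prodCongrLeft fun b => bif b then β else α
  map_rel_iff' := by
    rintro ⟨u, _ | _⟩ ⟨v, _ | _⟩ <;> simp [ADC, h u v]

namespace ADC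

theorem false_true_iff {u v : V} : ADC r (u, false) (v, true) ↔ r u v := by
  simp [ADC]

theorem exists_rel_of_relIso (e : ADC r ≃r ADC s) {a b : W} (hab : s a b) :
    ∃ u v, r u v ∧ e (u, false) = (a, false) ∧ e (v, true) = (b, true) := by
  obtain ⟨⟨u, i⟩, hu⟩ := e.surjective (a, false)
  obtain ⟨⟨v, j⟩, hv⟩ := e.surjective (b, true)
  have arc : ADC r (u, i) (v, j) := by
    rwa [← e.map_rel_iff, hu, hv, false_true_iff]
  obtain ⟨huv, rfl, rfl⟩ := arc
  exact ⟨u, v, huv, hu, hv⟩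

theorem exists_isTFIso_of_relIso [Finite V] (e : ADC r ≃r ADC s) :
    ∃ α β : V ≃ W, IsTFIso r s α β := by
  have map_arc {u v : V} (huv : r u v) : ADC s (e (u, false)) (e (v, true)) :=
    e.map_rel_iff.2 (false_true_iff.2 huv)
  obtain ⟨α, hα⟩ := exists_equiv_extending_on_fiber e.toEquiv (b := false)
    (S := {u | ∃ v, r u v}) fun u ⟨v, huv⟩ => (map_arc huv).2.1
  obtain ⟨β, hβ⟩ := exists_equiv_extending_on_fiber e.toEquiv (b := true)
    (S := {v | ∃ u, r u v}) fun v ⟨u, huv⟩ => (map_arc huv).2.2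
  have apply_tail {u v : V} (huv : r u v) : e (u, false) = (α u, false) := hα u ⟨v, huv⟩
  have apply_head {u v : V} (huv : r u v) : e (v, true) = (β v, true) := hβ v ⟨u, huv⟩
  refine ⟨α, β, fun u v => ⟨fun huv => ?_, fun hαβ => ?_⟩⟩
  · rw [← false_true_iff (r := s), ← apply_tail huv, ← apply_head huv]
    exact map_arc huv
  · obtain ⟨u', v', huv', hu', hv'⟩ := exists_rel_of_relIso e hαβ
    have tail_eq : u' = u := α.injective (Prod.ext_iff.1 ((apply_tail huv').symm.trans hu')).1
    have head_eq : v' = v := β.injective (Prod.ext_iff.1 ((apply_head huv').symm.trans hv')).1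
    rwa [tail_eq, head_eq] at huv'

end ADC

end DoubleCover

/-- Two digraphs are TF-isomorphic iff their alternating double covers are isomorphic. -/
theorem tf_isomorphic_iff_adc_iso {V W : Type*} [Fintype V] [Fintype W]
    (rG : V → V → Prop) (rH : W → W → Prop) :
    (∃ α β : V ≃ W, ∀ u v : V, rG u v ↔ rH (α u) (β v)) ↔
      (∃ e : V × Bool ≃ W × Bool, ∀ x y : V × Bool, ADC rG x y ↔ ADC rH (e x) (e y)) := by
  constructor
  · rintro ⟨α, β, h⟩
    have tfIso : IsTFIso rG rH α β := h
    exact ⟨tfIso.adcRelIso.toEquiv, fun _ _ => tfIso.adcRelIso.map_rel_iff.symm⟩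
  · rintro ⟨e, he⟩
    exact ADC.exists_isTFIso_of_relIso ⟨e, (he _ _).symm⟩
end

section
/- Let G be a connected simple graph on a finite vertex type V. Then the canonical double cover CDC(G) is disconnected (not connected as a simple graph) if and only if G is bipartite (2-colorable). -/
open SimpleGraph

namespace CDC

variable {V : Type*} (G : SimpleGraph V)

/-- The covering projection of the canonical double cover onto its base graph. -/
def proj : CDC G →g G where
  toFun := Prod.fst
  map_rel' h := h.1

/-- The two-colouring of the canonical double cover by the sheet containing a vertex. -/
def sheetColoring : (CDC G).Coloring Bool :=
  Coloring.mk Prod.snd fun h => h.2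

variable {G}

theorem even_length_iff {x y : V × Bool} (p : (CDC G).Walk x y) :
    Even p.length ↔ x.2 = y.2 :=
  ((sheetColoring G).even_length_iff_congr p).trans Bool.eq_iff_iff.symm

theorem reachable_of_walk {u v : V} (p : G.Walk u v) {i j : Bool}
    (hp : Even p.length ↔ i = j) : (CDC G).Reachable (u, i) (v, j) := by
  induction p generalizing i with
  | nil =>
    obtain rfl : i = j := hp.mp Even.zero
    rfl
  | @cons u w v huw p ih =>
    have first_step : (CDC G).Adj (u, i) (w, !i) := ⟨huw, (Bool.not_ne_self i).symm⟩
    have tail_parity : Even p.length ↔ (!i) = j := by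
      rw [Walk.length_cons, Nat.even_add_one] at hp
      rw [← not_iff_not, hp, Bool.not_eq, not_not]
    exact first_step.reachable.trans (ih tail_parity)

theorem reachable_iff_exists_walk {x y : V × Bool} :
    (CDC G).Reachable x y ↔ ∃ p : G.Walk x.1 y.1, (Even p.length ↔ x.2 = y.2) := by
  constructor
  · rintro ⟨p⟩
    have hp : Even (p.map (proj G)).length ↔ x.2 = y.2 := by
      rw [Walk.length_map, even_length_iff p]
    exact ⟨p.map (proj G), hp⟩
  · rintro ⟨p, hp⟩
    exact reachable_of_walk p hp

theorem connected_iff :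
    (CDC G).Connected ↔ G.Connected ∧ ∃ (u : V) (p : G.Walk u u), Odd p.length := by
  constructor
  · intro h
    have hG : G.Connected := h.map (proj G) Prod.fst_surjective
    obtain ⟨u⟩ := hG.nonempty
    obtain ⟨p, hp⟩ := reachable_iff_exists_walk.mp (h (u, false) (u, true))
    exact ⟨hG, u, p, by simpa using hp⟩
  · rintro ⟨hG, u, p, hp⟩
    refine (connected_iff_exists_forall_reachable _).mpr ⟨(u, false), fun ⟨v, j⟩ => ?_⟩
    obtain ⟨q⟩ := hG u v
    by_cases hq : Even q.length ↔ false = j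
    · exact reachable_of_walk q hq
    · have hpq : Even (p.append q).length ↔ false = j := by
        rw [Walk.length_append, Nat.even_add, iff_false_left (Nat.not_even_iff_odd.mpr hp)]
        tauto
      exact reachable_of_walk (p.append q) hpq

end CDC

theorem cdc_not_connected_iff_bipartite_general {V : Type*} (G : SimpleGraph V) :
    ¬ (CDC G).Connected ↔ ¬ G.Connected ∨ G.Colorable 2 := by
  rw [CDC.connected_iff, not_and_or, two_colorable_iff_forall_loop_even]
  simp only [not_exists, Nat.not_odd_iff_even]

/-- For a connected graph `G`, the canonical double cover is disconnected
iff `G` is bipartite. -/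
theorem cdc_not_connected_iff_bipartite {V : Type*} [Fintype V]
    (G : SimpleGraph V) (hG : G.Connected) :
    ¬ (CDC G).Connected ↔ G.Colorable 2 := by
  rw [cdc_not_connected_iff_bipartite_general, or_iff_right (not_not_intro hG)]
end

section
/- Let G be a simple graph on a finite vertex type V and let π : V ≃ V be a bijection such that (i) for all u, v ∈ V, if u and v are adjacent in G then π⁻¹(v) and π(u) are adjacent in G, and (ii) for all a ∈ V, a and π(a) are not adjacent in G. Then the relation on V defined by 'a ~ b iff a and π(b) are adjacent in G' is symmetric and irreflexive, hence defines a simple graph H' on V (the fold of the lift of G guided by π), and moreover CDC(G) and CDC(H') are isomorphic as simple graphs. -/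
/-!
The fold `H'` is related to `G` by a two-fold isomorphism: adjacency `a ~ b` in `H'` is adjacency of
`a` and `π b` in `G`, so the tail of an arc is moved by the identity and its head by `π`. In a
canonical double cover the two ends of an edge lie in different layers, so one may apply the
identity on one layer and `π` on the other.
-/

/-- A two-fold isomorphism from `G` to `H`: two bijections of the vertices, one applied to the tail
and one to the head of every arc, which together preserve and reflect adjacency. It is the kind of
map between graphs that lifts to an isomorphism of canonical double covers. -/
structure TwoFoldIso {V W : Type*} (G : SimpleGraph V) (H : SimpleGraph W) where
  tail : V ≃ W
  head : V ≃ W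
  adj_iff (u v : V) : H.Adj (tail u) (head v) ↔ G.Adj u v

namespace TwoFoldIso

variable {V W : Type*} {G : SimpleGraph V} {H : SimpleGraph W}

theorem adj_head_tail_iff (f : TwoFoldIso G H) (u v : V) :
    H.Adj (f.head u) (f.tail v) ↔ G.Adj u v := by
  rw [H.adj_comm, f.adj_iff, G.adj_comm]

/-- The isomorphism of canonical double covers lifting a two-fold isomorphism. Layer `false` is
taken to carry the tails and layer `true` the heads. -/
def cdcIso (f : TwoFoldIso G H) : CDC G ≃g CDC H where
  toEquiv := Equiv.prodCongrLeft fun i => bif i then f.head else f.tail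
  map_rel_iff' := by
    rintro ⟨u, _ | _⟩ ⟨v, _ | _⟩ <;> simp [CDC, f.adj_iff, f.adj_head_tail_iff]

end TwoFoldIso

theorem rel_apply_swap {α : Type*} {r : α → α → Prop} {π : α ≃ α}
    (h : ∀ u v, r u v → r (π.symm v) (π u)) {a b : α} (hab : r a (π b)) : r b (π a) := by
  simpa only [Equiv.symm_apply_apply] using h a (π b) hab

theorem fold_guided_by_switching_involution_general {V : Type*}
    (G : SimpleGraph V) (π : V ≃ V)
    (h1 : ∀ u v : V, G.Adj u v → G.Adj (π.symm v) (π u))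
    (h2 : ∀ a : V, ¬ G.Adj a (π a)) :
    (∀ a b : V, G.Adj a (π b) → G.Adj b (π a)) ∧
    (∀ a : V, ¬ G.Adj a (π a)) ∧
    (∀ H' : SimpleGraph V, (∀ a b : V, H'.Adj a b ↔ G.Adj a (π b)) →
      Nonempty (CDC G ≃g CDC H')) := by
  refine ⟨fun _ _ => rel_apply_swap h1, h2, fun H' hH' => ?_⟩
  let unfolding : TwoFoldIso H' G :=
    { tail := Equiv.refl V
      head := π
      adj_iff := fun a b => (hH' a b).symm }
  exact ⟨unfolding.cdcIso.symm⟩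

/-- Folding the lift of `G` guided by a strongly switching permutation `π`:
the relation `a ~ b iff a ~ π(b)` is symmetric and irreflexive, and the simple
graph `H'` it defines has the same canonical double cover as `G`. -/
theorem fold_guided_by_switching_involution {V : Type*} [Fintype V]
    (G : SimpleGraph V) (π : V ≃ V)
    (h1 : ∀ u v : V, G.Adj u v → G.Adj (π.symm v) (π u))
    (h2 : ∀ a : V, ¬ G.Adj a (π a)) :
    (∀ a b : V, G.Adj a (π b) → G.Adj b (π a)) ∧
    (∀ a : V, ¬ G.Adj a (π a)) ∧
    (∀ H' : SimpleGraph V, (∀ a b : V, H'.Adj a b ↔ G.Adj a (π b)) →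
      Nonempty (CDC G ≃g CDC H')) :=
  fold_guided_by_switching_involution_general G π h1 h2
end

section
/- Let G be a simple graph on a vertex type V and let π : V ≃ V be a bijection such that for all u, v ∈ V, if u and v are adjacent in G then π⁻¹(v) and π(u) are adjacent in G. Define φ : V × Bool → V × Bool by φ(v, false) = (π(v), true) and φ(v, true) = (π⁻¹(v), false). Then φ is an involution (φ ∘ φ = id), φ interchanges the two colour classes V × {false} and V × {true}, and φ is an automorphism of the canonical double cover CDC(G): for all x, y ∈ V × Bool, x and y are adjacent in CDC(G) if and only if φ(x) and φ(y) are adjacent in CDC(G). -/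
/-- A guide for folding the lift of `G`: a permutation `π` such that `(u, v) ↦ (π⁻¹ v, π u)` sends
arcs of `G` to arcs. -/
def IsFoldingGuide {V : Type*} (G : SimpleGraph V) (π : V ≃ V) : Prop :=
  ∀ u v : V, G.Adj u v → G.Adj (π.symm v) (π u)

/-- The map on the vertices of a double cover that a permutation `π` of the base induces: it
exchanges the colour classes, acting as `π` on class `false` and as `π⁻¹` on class `true`. -/
def coverSwitch {V : Type*} (π : V ≃ V) : V × Bool → V × Bool
  | (v, false) => (π v, true)
  | (v, true) => (π.symm v, false)

section

variable {V : Type*}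

theorem coverSwitch_involutive (π : V ≃ V) : Function.Involutive (coverSwitch π)
  | (v, false) => congrArg (·, false) (π.symm_apply_apply v)
  | (v, true) => congrArg (·, true) (π.apply_symm_apply v)

theorem snd_coverSwitch (π : V ≃ V) : ∀ x : V × Bool, (coverSwitch π x).2 = !x.2
  | (_, false) => rfl
  | (_, true) => rfl

variable {G : SimpleGraph V} {π : V ≃ V}

-- The map `(u, v) ↦ (π⁻¹ v, π u)` is an involution, so preserving arcs forces reflecting them.
theorem IsFoldingGuide.adj_iff (h : IsFoldingGuide G π) {u v : V} :
    G.Adj (π.symm v) (π u) ↔ G.Adj u v where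
  mp huv := by simpa only [Equiv.symm_apply_apply, Equiv.apply_symm_apply] using h _ _ huv
  mpr := h u v

theorem IsFoldingGuide.adj_coverSwitch_iff (h : IsFoldingGuide G π) (x y : V × Bool) :
    (CDC G).Adj (coverSwitch π x) (coverSwitch π y) ↔ (CDC G).Adj x y := by
  obtain ⟨u, _ | _⟩ := x <;> obtain ⟨v, _ | _⟩ := y
  case false.false | true.true => exact iff_of_false (fun hxy => hxy.2 rfl) (fun hxy => hxy.2 rfl)
  case false.true =>
    have base_iff : G.Adj (π u) (π.symm v) ↔ G.Adj u v := (G.adj_comm _ _).trans h.adj_iff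
    exact and_congr base_iff ne_comm
  case true.false =>
    have base_iff : G.Adj (π.symm u) (π v) ↔ G.Adj u v := h.adj_iff.trans (G.adj_comm _ _)
    exact and_congr base_iff ne_comm

end

/-- Every guide for folding the lift of `G` is a switching involution of the
automorphism group of `CDC(G)`: the map `φ` with `φ(v,false) = (π v, true)` and
`φ(v,true) = (π⁻¹ v, false)` is an involution, interchanges the two colour
classes, and is an automorphism of `CDC(G)`. -/
theorem guide_is_switching_involution {V : Type*} (G : SimpleGraph V) (π : V ≃ V)
    (h1 : ∀ u v : V, G.Adj u v → G.Adj (π.symm v) (π u))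
    (φ : V × Bool → V × Bool)
    (hφf : ∀ v : V, φ (v, false) = (π v, true))
    (hφt : ∀ v : V, φ (v, true) = (π.symm v, false)) :
    (∀ x : V × Bool, φ (φ x) = x) ∧
    (∀ x : V × Bool, (φ x).2 = !x.2) ∧
    (∀ x y : V × Bool, (CDC G).Adj x y ↔ (CDC G).Adj (φ x) (φ y)) := by
  obtain rfl : φ = coverSwitch π := by
    funext ⟨v, colour⟩
    cases colour
    · exact hφf v
    · exact hφt v
  have guide : IsFoldingGuide G π := h1
  exact ⟨coverSwitch_involutive π, snd_coverSwitch π, fun x y =>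
    (guide.adj_coverSwitch_iff x y).symm⟩
end

section
/- Let G be a simple graph on a vertex type V. If G is bipartite (2-colorable), then the canonical double cover CDC(G) is isomorphic to the disjoint union of two copies of G, i.e., to the simple graph on V × Bool in which (u,i) and (v,j) are adjacent if and only if u and v are adjacent in G and i = j. -/
/-- The disjoint union of two copies of `G`, realized on `V × Bool`. -/
def twoCopies {V : Type*} (G : SimpleGraph V) : SimpleGraph (V × Bool) where
  Adj x y := G.Adj x.1 y.1 ∧ x.2 = y.2
  symm := ⟨fun _ _ h => ⟨h.1.symm, h.2.symm⟩⟩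
  loopless := ⟨fun _ h => G.loopless.irrefl _ h.1⟩

/-- The involution of `V × Bool` that swaps the two points over each `v` with `f v = true`. When `f`
is a proper colouring, it moves exactly one end of each edge to the other sheet, so it exchanges
edges between sheets with edges within a sheet. -/
def switchSheets {V : Type*} (f : V → Bool) : Equiv.Perm (V × Bool) :=
  Function.Involutive.toPerm (fun x => (x.1, x.2 ^^ f x.1)) fun x => by simp

theorem twoCopies_adj_switchSheets {V : Type*} {G : SimpleGraph V} (c : G.Coloring Bool)
    (x y : V × Bool) :
    (twoCopies G).Adj (switchSheets c x) (switchSheets c y) ↔ (CDC G).Adj x y := by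
  refine and_congr_right fun hadj => ?_
  have hcolor : c y.1 = !c x.1 := Bool.eq_not.mpr (c.valid hadj).symm
  calc (x.2 ^^ c x.1) = (y.2 ^^ c y.1)
      ↔ (x.2 ^^ c x.1) = (!y.2 ^^ c x.1) := by rw [hcolor, Bool.xor_not, Bool.not_xor]
    _ ↔ x.2 = !y.2 := Bool.xor_left_inj
    _ ↔ x.2 ≠ y.2 := Bool.eq_not

/-- If `G` is bipartite, then `CDC(G)` is isomorphic to the disjoint union of
two copies of `G`. -/
theorem cdc_of_bipartite {V : Type*} (G : SimpleGraph V) (h : G.Colorable 2) :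
    Nonempty (CDC G ≃g twoCopies G) := by
  have c : G.Coloring Bool := h.toColoring Fintype.card_bool.ge
  exact ⟨⟨switchSheets c, twoCopies_adj_switchSheets c _ _⟩⟩
end

section
/- Let k ≥ 3 be an odd natural number. Let D be the disjoint union of two copies of the cycle graph C_k, realized on (Fin k) × Bool with (a,i) adjacent to (b,j) iff a and b are adjacent in the cycle graph on Fin k and i = j, and let C be the cycle graph C_{2k} on Fin (2k). Then D and C are TF-cousins: (1) there exist bijections α, β : (Fin k) × Bool ≃ Fin (2k) such that for all x, y, x and y are adjacent in D if and only if α(x) and β(y) are adjacent in C; and (2) D and C are not isomorphic as simple graphs. -/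
/-- The cycle graph on `Fin n`: `a` and `b` are joined exactly when they differ
by `±1` modulo `n`. -/
def cycleG (n : ℕ) : SimpleGraph (Fin n) where
  Adj a b := a ≠ b ∧ ((a.val + 1) % n = b.val ∨ (b.val + 1) % n = a.val)
  symm := ⟨fun _ _ h => ⟨h.1.symm, h.2.symm⟩⟩
  loopless := ⟨fun _ h => h.1 rfl⟩

/-!
Leaving `α` the identity and letting `β` swap the two sheets is a TF-isomorphism from `G ∪ G` to the
bipartite double cover of `G`, for every graph `G`. The cycle `C_k` is the circulant graph of `ℤ/k`
with jump `1`, so its double cover is the circulant graph of `ℤ/2 × ℤ/k` with jump `(1, 1)`. For odd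
`k` the Chinese remainder theorem identifies the latter with `C_{2k}`, which is connected, while
`C_k ∪ C_k` is not.
-/

open SimpleGraph

section TFIsomorphism

variable {U V W : Type*} {F : SimpleGraph U} {G : SimpleGraph V} {H : SimpleGraph W}

/-- TF-isomorphism (two-fold isomorphism) of graphs: a pair of bijections, one for each end of an
ordered pair of vertices, which jointly preserve and reflect adjacency. -/
def IsTFIsomorphic (G : SimpleGraph V) (H : SimpleGraph W) : Prop :=
  ∃ α β : V ≃ W, ∀ u v, G.Adj u v ↔ H.Adj (α u) (β v)

theorem IsTFIsomorphic.trans_iso (h : IsTFIsomorphic F G) (e : G ≃g H) : IsTFIsomorphic F H := by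
  obtain ⟨α, β, hαβ⟩ := h
  exact ⟨α.trans e.toEquiv, β.trans e.toEquiv, fun u v => (hαβ u v).trans e.map_adj_iff.symm⟩

end TFIsomorphism

section TwoCopies

variable {V : Type*} (G : SimpleGraph V)

theorem twoCopies_isTFIsomorphic_bipartiteDoubleCover :
    IsTFIsomorphic (twoCopies G) G.bipartiteDoubleCover := by
  let sheet : V × Bool ≃ V ⊕ V := (Equiv.prodComm V Bool).trans (Equiv.boolProdEquivSum V)
  let swap : V × Bool ≃ V × Bool := (Equiv.refl V).prodCongr Equiv.boolNot
  refine ⟨sheet, swap.trans sheet, ?_⟩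
  rintro ⟨u, _ | _⟩ ⟨v, _ | _⟩ <;> simp [sheet, swap, twoCopies]

variable {G} in
theorem snd_eq_of_reachable_twoCopies {x y : V × Bool} (h : (twoCopies G).Reachable x y) :
    x.2 = y.2 := by
  obtain ⟨p⟩ := h
  induction p with
  | nil => rfl
  | cons hadj _ ih => exact hadj.2.trans ih

theorem not_preconnected_twoCopies [Nonempty V] : ¬ (twoCopies G).Preconnected := by
  inhabit V
  intro h
  exact Bool.false_ne_true (snd_eq_of_reachable_twoCopies (h (default, false) (default, true)))

theorem isEmpty_twoCopies_iso [Nonempty V] {W : Type*} {H : SimpleGraph W} (hH : H.Preconnected) :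
    IsEmpty (twoCopies G ≃g H) :=
  ⟨fun e => not_preconnected_twoCopies G (e.preconnected_iff.mpr hH)⟩

end TwoCopies

section Circulant

variable {A B : Type*} [AddGroup A] [AddGroup B]

/-- The isomorphism of circulant graphs induced by an isomorphism of groups which matches the sets
of jumps. -/
def circulantGraphIso (e : A ≃+ B) {s : Set A} {t : Set B} (h : ∀ a, e a ∈ t ↔ a ∈ s) :
    circulantGraph s ≃g circulantGraph t where
  toEquiv := e.toEquiv
  map_rel_iff' := by simp [← map_sub, h]

/-- The double cover of a circulant graph as a circulant graph, the two sheets being labelled by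
`Fin 2`. -/
def bipartiteDoubleCoverCirculantGraphIso {s : Set A} (hs : 0 ∉ s) :
    (circulantGraph s).bipartiteDoubleCover ≃g circulantGraph (({1} : Set (Fin 2)) ×ˢ s) where
  toEquiv := (Equiv.boolProdEquivSum A).symm.trans (finTwoEquiv.symm.prodCongr (Equiv.refl A))
  map_rel_iff' := by
    have ne_of_sub_mem (a b : A) (h : a - b ∈ s ∨ b - a ∈ s) : a ≠ b := by
      rintro rfl
      simp [hs] at h
    have neg_one : (-1 : Fin 2) = 1 := by decide
    rintro (a | a) (b | b) <;> simp [finTwoEquiv, neg_one, and_iff_right_of_imp (ne_of_sub_mem a b)]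

end Circulant

section Cycle

theorem cycleG_eq_circulantGraph (n : ℕ) [NeZero n] : cycleG n = circulantGraph {1} := by
  ext a b
  simp only [cycleG, circulantGraph_adj, Set.mem_singleton_iff, sub_eq_iff_eq_add', Fin.ext_iff,
    Fin.val_add, Fin.val_one', Nat.add_mod_mod, ne_eq, eq_comm, or_comm]

theorem preconnected_cycleG (n : ℕ) [NeZero n] : (cycleG n).Preconnected := by
  obtain ⟨m, rfl⟩ := Nat.exists_eq_succ_of_ne_zero (NeZero.ne n)
  rw [cycleG_eq_circulantGraph, ← cycleGraph_eq_circulantGraph]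
  exact cycleGraph_preconnected

/-- The Chinese remainder isomorphism, for `Fin` in place of `ZMod`. -/
def finChineseRemainder {m n : ℕ} [NeZero m] [NeZero n] (h : m.Coprime n) :
    Fin (m * n) ≃+* Fin m × Fin n :=
  (ZMod.finEquiv (m * n)).trans <| (ZMod.chineseRemainder h).trans <|
    (ZMod.finEquiv m).symm.prodCongr (ZMod.finEquiv n).symm

open Fin.CommRing in
theorem finChineseRemainder_eq_one_iff {m n : ℕ} [NeZero m] [NeZero n] (h : m.Coprime n)
    {a : Fin (m * n)} : finChineseRemainder h a = 1 ↔ a = 1 :=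
  map_eq_one_iff _ (finChineseRemainder h).injective

theorem nonempty_bipartiteDoubleCover_cycleG_iso {k : ℕ} (hodd : Odd k) (hk : k ≠ 1) :
    Nonempty ((cycleG k).bipartiteDoubleCover ≃g cycleG (2 * k)) := by
  have : NeZero k := ⟨hodd.pos.ne'⟩
  rw [cycleG_eq_circulantGraph, cycleG_eq_circulantGraph]
  have zero_notMem : (0 : Fin k) ∉ ({1} : Set (Fin k)) := by simpa using hk
  let crt : Fin (2 * k) ≃+* Fin 2 × Fin k := finChineseRemainder (Nat.coprime_two_left.mpr hodd)
  have crt_mem (a : Fin (2 * k)) : crt a ∈ ({1} : Set (Fin 2)) ×ˢ {1} ↔ a ∈ ({1} : Set _) := by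
    rw [Set.singleton_prod_singleton]
    exact finChineseRemainder_eq_one_iff _
  exact ⟨(bipartiteDoubleCoverCirculantGraphIso zero_notMem).trans
    (circulantGraphIso crt.toAddEquiv crt_mem).symm⟩

end Cycle

/-- For odd `k ≥ 3`, the disjoint union `C_k ∪ C_k` and the cycle `C_{2k}` are
TF-cousins: they are TF-isomorphic but not isomorphic. -/
theorem seed_pair_tf_cousins (k : ℕ) (hk : 3 ≤ k) (hodd : Odd k) :
    (∃ α β : (Fin k × Bool) ≃ Fin (2 * k),
      ∀ x y : Fin k × Bool,
        (twoCopies (cycleG k)).Adj x y ↔ (cycleG (2 * k)).Adj (α x) (β y)) ∧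
    IsEmpty (twoCopies (cycleG k) ≃g cycleG (2 * k)) := by
  have : NeZero k := ⟨by omega⟩
  obtain ⟨e⟩ := nonempty_bipartiteDoubleCover_cycleG_iso hodd (by omega)
  exact ⟨(twoCopies_isTFIsomorphic_bipartiteDoubleCover (cycleG k)).trans_iso e,
    isEmpty_twoCopies_iso (cycleG k) (preconnected_cycleG (2 * k))⟩
end

section
/- For every natural number n ≥ 1, the claw graph CG(n) and its companion CG'(n) are not isomorphic as simple graphs. -/
/-- Vertices of the claw graph `CG(n)`: circuit vertices indexed by `ZMod (6n)`,
leaves indexed by `Fin n × Fin 3`, and centres indexed by `Fin n`. -/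
inductive ClawVert (n : ℕ) : Type
  | circ : ZMod (6 * n) → ClawVert n
  | leaf : Fin n → Fin 3 → ClawVert n
  | centre : Fin n → ClawVert n
  deriving DecidableEq

/-- Edge relation (before symmetrization) for the claw graph `CG(n)`:
a cycle `C_{6n}` on the circuit vertices, claw edges `c_i ~ ℓ_{i,j}`, and leaf
`ℓ_{i,j}` joined to the antipodal pair `u_{i+jn}`, `u_{i+jn+3n}`. -/
def cgRel (n : ℕ) : ClawVert n → ClawVert n → Prop
  | .circ m, .circ m' => m' = m + 1
  | .centre i, .leaf i' _ => i = i'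
  | .leaf i j, .circ m =>
      m = ((i : ℕ) : ZMod (6 * n)) + ((j : ℕ) : ZMod (6 * n)) * ((n : ℕ) : ZMod (6 * n)) ∨
      m = ((i : ℕ) : ZMod (6 * n)) + ((j : ℕ) : ZMod (6 * n)) * ((n : ℕ) : ZMod (6 * n))
            + ((3 * n : ℕ) : ZMod (6 * n))
  | _, _ => False

/-- The claw graph `CG(n)`. -/
def CG (n : ℕ) : SimpleGraph (ClawVert n) := SimpleGraph.fromRel (cgRel n)

/-- Edge relation (before symmetrization) for the companion `CG'(n)`: the same
claw and leaf edges, but the circuit `C_{6n}` is replaced by two disjoint copies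
of `C_{3n}`: writing a circuit index as `s·3n + a` with `0 ≤ a < 3n`,
`u_{s·3n+a} ~ u_{s'·3n+a'}` iff `s = s'` and `a' ≡ a ± 1 (mod 3n)`. -/
def cgRel' (n : ℕ) : ClawVert n → ClawVert n → Prop
  | .circ m, .circ m' =>
      m.val / (3 * n) = m'.val / (3 * n) ∧
      m'.val % (3 * n) = (m.val % (3 * n) + 1) % (3 * n)
  | .centre i, .leaf i' _ => i = i'
  | .leaf i j, .circ m =>
      m = ((i : ℕ) : ZMod (6 * n)) + ((j : ℕ) : ZMod (6 * n)) * ((n : ℕ) : ZMod (6 * n)) ∨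
      m = ((i : ℕ) : ZMod (6 * n)) + ((j : ℕ) : ZMod (6 * n)) * ((n : ℕ) : ZMod (6 * n))
            + ((3 * n : ℕ) : ZMod (6 * n))
  | _, _ => False

/-- The companion claw graph `CG'(n)`. -/
def CG' (n : ℕ) : SimpleGraph (ClawVert n) := SimpleGraph.fromRel (cgRel' n)

/-! The number `2` is an eigenvalue of higher multiplicity for `CG'(n)` than for `CG(n)`. Exchanging
`u_m` with its antipode `u_{m+3n}` preserves `CG(n)`, so the difference of a `2`-eigenvector of
`CG(n)` and its exchanged copy is supported on the circuit, where it is a harmonic function on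
`C_{6n}`. It is therefore constant, and being odd it vanishes. Hence every `2`-eigenvector takes
equal values at antipodes, and such vectors cannot tell the two graphs apart. On the other hand
`CG'(n)` has an extra `2`-eigenvector, equal to `1` on one circuit, to `-1` on the other, and to
`0` elsewhere. -/

namespace ClawGraph

open Matrix

section Spectrum

variable {V W R : Type*} [Fintype V] [Fintype W] [CommRing R]
  {G : SimpleGraph V} {H : SimpleGraph W} [DecidableRel G.Adj] [DecidableRel H.Adj]

lemma adjMatrix_mulVec_comp_iso (φ : G ≃g H) (f : W → R) :
    G.adjMatrix R *ᵥ (f ∘ φ) = (H.adjMatrix R *ᵥ f) ∘ φ := by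
  ext v
  simp only [Function.comp_apply, SimpleGraph.adjMatrix_mulVec_apply]
  exact Finset.sum_equiv φ.toEquiv (by simp [φ.map_adj_iff]) fun _ _ => rfl

/-- The eigenspace of the adjacency matrix of `G` for `μ`, as a space of functions on vertices. -/
def adjEigenspace (G : SimpleGraph V) [DecidableRel G.Adj] (μ : R) : Submodule R (V → R) :=
  Module.End.eigenspace (G.adjMatrix R).mulVecLin μ

lemma mem_adjEigenspace_iff {μ : R} {f : V → R} :
    f ∈ adjEigenspace G μ ↔ G.adjMatrix R *ᵥ f = μ • f :=
  Module.End.mem_eigenspace_iff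

lemma comp_iso_mem_adjEigenspace_iff (φ : G ≃g H) {μ : R} {f : W → R} :
    f ∘ φ ∈ adjEigenspace G μ ↔ f ∈ adjEigenspace H μ := by
  rw [mem_adjEigenspace_iff, mem_adjEigenspace_iff, adjMatrix_mulVec_comp_iso]
  exact φ.surjective.injective_comp_right.eq_iff (b := μ • f)

lemma finrank_adjEigenspace_eq_of_iso (φ : G ≃g H) (μ : R) :
    Module.finrank R (adjEigenspace G μ) = Module.finrank R (adjEigenspace H μ) := by
  have hmap : (adjEigenspace G μ).map (LinearEquiv.funCongrLeft R R φ.symm.toEquiv).toLinearMap =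
      adjEigenspace H μ := by
    ext f
    rw [Submodule.mem_map_equiv]
    exact comp_iso_mem_adjEigenspace_iff φ
  rw [← hmap, LinearEquiv.finrank_map_eq]

end Spectrum

section Harmonic

variable {N : ℕ}

lemma eq_of_forall_add_one_eq {α : Type*} {g : ZMod N → α} (h : ∀ m, g (m + 1) = g m)
    (a b : ZMod N) : g a = g b := by
  obtain ⟨k, hk⟩ := ZMod.intCast_surjective (a - b)
  have hperiodic : Function.Periodic g 1 := h
  simpa [hk] using hperiodic.int_mul k b

lemma eq_of_forall_harmonic [NeZero N] {A : Type*} [AddCommGroup A] [IsAddTorsionFree A]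
    {g : ZMod N → A} (h : ∀ m, g (m + 1) + g (m - 1) = 2 • g m) (a b : ZMod N) : g a = g b := by
  set δ : ZMod N → A := fun m => g (m + 1) - g m with hδ
  have hconst : ∀ m, δ m = δ 0 := fun m => by
    refine eq_of_forall_add_one_eq (fun x => ?_) m 0
    have hx := h (x + 1)
    rw [add_sub_cancel_right, two_nsmul] at hx
    simp only [hδ]
    rw [sub_eq_sub_iff_add_eq_add, hx]
  have hsum : ∑ m, δ m = 0 := by
    rw [Finset.sum_sub_distrib, sub_eq_zero]
    exact Equiv.sum_comp (Equiv.addRight 1) g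
  have hzero : δ 0 = 0 := by
    simp only [hconst, Finset.sum_const, Finset.card_univ, ZMod.card] at hsum
    exact (nsmul_eq_zero_iff_right (NeZero.ne N)).1 hsum
  exact eq_of_forall_add_one_eq (fun m => sub_eq_zero.1 ((hconst m).trans hzero)) a b

end Harmonic

open ClawVert

variable {n : ℕ}

section Antipode

/-- The residue of `3n` modulo `6n`, the offset between antipodal circuit vertices. -/
def half (n : ℕ) : ZMod (6 * n) := (3 * n : ℕ)

lemma half_add_half (n : ℕ) : half n + half n = 0 := by
  rw [half, ← Nat.cast_add, ZMod.natCast_eq_zero_iff]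
  exact ⟨1, by ring⟩

/-- The involution exchanging antipodal circuit vertices and fixing all leaves and centres. -/
def antipode : ClawVert n → ClawVert n
  | circ m => circ (m + half n)
  | v => v

lemma antipode_involutive : Function.Involutive (antipode (n := n)) := by
  rintro (m | _ | _)
  · simp only [antipode, add_assoc, half_add_half, add_zero]
  all_goals rfl

lemma cgRel_antipode_iff {v w : ClawVert n} :
    cgRel n (antipode v) (antipode w) ↔ cgRel n v w := by
  cases v <;> cases w
  case circ.circ a b => simp only [antipode, cgRel, add_right_comm a (half n) 1, add_left_inj]
  case leaf.circ i j m =>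
    simp only [antipode, cgRel]
    change _ ∨ _ = _ + half n ↔ _ ∨ _ = _ + half n
    rw [add_left_inj, ← eq_sub_iff_add_eq, sub_eq_add_neg,
      neg_eq_of_add_eq_zero_left (half_add_half n), or_comm]
  all_goals rfl

/-- The involution `antipode` as an automorphism of `CG(n)`. -/
def antipodeIso (n : ℕ) : CG n ≃g CG n where
  toEquiv := antipode_involutive.toPerm
  map_rel_iff' := by
    simp [CG, SimpleGraph.fromRel_adj, cgRel_antipode_iff, antipode_involutive.injective.eq_iff]

end Antipode

section Folding

/-- The reduction of circuit indices modulo `3n`, which identifies antipodes. -/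
def fold (n : ℕ) : ZMod (6 * n) →+* ZMod (3 * n) :=
  ZMod.castHom (⟨2, by ring⟩ : 3 * n ∣ 6 * n) (ZMod (3 * n))

/-- The sign `(-1)^s` of the circuit index `s·3n + a`, where `0 ≤ a < 3n`. -/
def sheetSign (m : ZMod (6 * n)) : ℚ := if m.val < 3 * n then 1 else -1

lemma fold_half (n : ℕ) : fold n (half n) = 0 := by
  rw [half, map_natCast, ZMod.natCast_self]

lemma sheetSign_ne_zero (m : ZMod (6 * n)) : sheetSign m ≠ 0 := by
  unfold sheetSign
  split_ifs <;> norm_num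

/-- Whichever of `x` and its antipode lies on the same `3n`-cycle of `CG'(n)` as `m`. -/
def sheetLift (m x : ZMod (6 * n)) : ZMod (6 * n) :=
  if sheetSign x = sheetSign m then x else x + half n

lemma fold_sheetLift (m x : ZMod (6 * n)) : fold n (sheetLift m x) = fold n x := by
  unfold sheetLift
  split_ifs
  · rfl
  · rw [map_add, fold_half, add_zero]

variable [NeZero n]

lemma fold_eq_natCast_val (m : ZMod (6 * n)) : fold n m = (m.val : ZMod (3 * n)) := by
  rw [← map_natCast (fold n), ZMod.natCast_zmod_val]

lemma fold_eq_iff {x y : ZMod (6 * n)} : fold n x = fold n y ↔ x = y ∨ x = y + half n := by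
  constructor
  · intro h
    have hker : fold n (x - y) = 0 := by rw [map_sub, h, sub_self]
    rw [fold_eq_natCast_val, ZMod.natCast_eq_zero_iff] at hker
    obtain ⟨k, hk⟩ := hker
    have hk2 : k < 2 := Nat.lt_of_mul_lt_mul_left (a := 3 * n) <|
      hk ▸ (ZMod.val_lt (x - y)).trans_eq (by ring)
    have hxy : x - y = (3 * n * k : ℕ) := by rw [← hk, ZMod.natCast_zmod_val]
    interval_cases k
    · exact Or.inl (sub_eq_zero.1 (by simpa using hxy))
    · exact Or.inr (sub_eq_iff_eq_add'.1 (by simpa [half] using hxy))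
  · rintro (rfl | rfl)
    · rfl
    · rw [map_add, fold_half, add_zero]

lemma fold_add_one_ne_fold_sub_one (m : ZMod (6 * n)) : fold n (m + 1) ≠ fold n (m - 1) := by
  intro h
  have htwo : ((2 : ℕ) : ZMod (3 * n)) = 0 := by
    rw [map_add, map_sub, map_one] at h
    push_cast
    linear_combination h
  have := Nat.le_of_dvd two_pos ((ZMod.natCast_eq_zero_iff _ _).1 htwo)
  have := NeZero.pos n
  omega

lemma fold_add_one_ne (m : ZMod (6 * n)) : fold n m + 1 ≠ fold n m := by
  intro h
  apply fold_add_one_ne_fold_sub_one m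
  rw [map_add, map_sub, map_one]
  linear_combination 2 * h

lemma sheetSign_eq_iff {x y : ZMod (6 * n)} :
    sheetSign x = sheetSign y ↔ x.val / (3 * n) = y.val / (3 * n) := by
  have hdiv (z : ZMod (6 * n)) : z.val / (3 * n) = if z.val < 3 * n then 0 else 1 := by
    have := ZMod.val_lt z
    split_ifs with hz
    · exact Nat.div_eq_of_lt hz
    · exact Nat.div_eq_of_lt_le (by omega) (by omega)
  simp only [sheetSign, hdiv]
  split_ifs <;> norm_num

lemma sheetSign_add_half (m : ZMod (6 * n)) : sheetSign (m + half n) = -sheetSign m := by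
  have hn := NeZero.pos n
  have hm := ZMod.val_lt m
  have hhalf : (half n).val = 3 * n := ZMod.val_cast_of_lt (by omega)
  simp only [sheetSign, ZMod.val_add, hhalf]
  by_cases h : m.val < 3 * n
  · rw [Nat.mod_eq_of_lt (by omega), if_neg (by omega), if_pos h]
  · rw [Nat.mod_eq_sub_mod (by omega), Nat.mod_eq_of_lt (by omega), if_pos (by omega), if_neg h,
      neg_neg]

lemma sheetSign_sheetLift (m x : ZMod (6 * n)) : sheetSign (sheetLift m x) = sheetSign m := by
  unfold sheetLift
  split_ifs with h
  · exact h
  · rw [sheetSign_add_half]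
    unfold sheetSign at h ⊢
    grind

lemma eq_sheetLift_iff {m x y : ZMod (6 * n)} :
    y = sheetLift m x ↔ sheetSign y = sheetSign m ∧ fold n y = fold n x := by
  constructor
  · rintro rfl
    exact ⟨sheetSign_sheetLift m x, fold_sheetLift m x⟩
  · rintro ⟨hsign, hfold⟩
    rw [← fold_sheetLift m x, fold_eq_iff] at hfold
    refine hfold.resolve_right fun h => sheetSign_ne_zero m ?_
    rw [h, sheetSign_add_half, sheetSign_sheetLift] at hsign
    exact self_eq_neg.1 hsign.symm

end Folding

section Adjacency

lemma CG'_adj_iff_CG_adj {v w : ClawVert n} (h : (∀ m, v ≠ circ m) ∨ ∀ m, w ≠ circ m) :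
    (CG' n).Adj v w ↔ (CG n).Adj v w := by
  cases v <;> cases w
  case circ.circ => simp at h
  all_goals rfl

variable [NeZero n]

lemma cgRel'_circ_iff {m x : ZMod (6 * n)} :
    cgRel' n (circ m) (circ x) ↔ sheetSign m = sheetSign x ∧ fold n x = fold n m + 1 := by
  rw [sheetSign_eq_iff, fold_eq_natCast_val, fold_eq_natCast_val, ← Nat.cast_succ,
    ZMod.natCast_eq_natCast_iff', Nat.succ_eq_add_one, ← Nat.mod_add_mod m.val]
  rfl

lemma CG_adj_circ_circ_iff {m x : ZMod (6 * n)} :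
    (CG n).Adj (circ m) (circ x) ↔ x = m + 1 ∨ x = m - 1 := by
  have hne (y : ZMod (6 * n)) : y + 1 ≠ y := fun h => fold_add_one_ne y <| by
    rw [← map_one (fold n), ← map_add, h]
  rw [CG, SimpleGraph.fromRel_adj, eq_sub_iff_add_eq, eq_comm (a := x + 1)]
  refine ⟨And.right, fun h => ⟨?_, h⟩⟩
  rintro ⟨⟩
  exact h.elim (fun h => hne m h.symm) fun h => hne m h.symm

lemma CG'_adj_circ_circ_iff {m x : ZMod (6 * n)} :
    (CG' n).Adj (circ m) (circ x) ↔ x = sheetLift m (m + 1) ∨ x = sheetLift m (m - 1) := by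
  rw [CG', SimpleGraph.fromRel_adj, cgRel'_circ_iff, cgRel'_circ_iff, eq_sheetLift_iff,
    eq_sheetLift_iff, map_add, map_sub, map_one, eq_sub_iff_add_eq, eq_comm (a := sheetSign m),
    eq_comm (a := fold n m)]
  refine ⟨And.right, fun h => ⟨?_, h⟩⟩
  rintro ⟨⟩
  exact h.elim (fun h => fold_add_one_ne m h.2.symm) fun h => fold_add_one_ne m h.2

end Adjacency

section AdjacencyMatrix

variable [NeZero n] {R : Type*} [CommRing R]

instance : Fintype (ClawVert n) :=
  Fintype.ofSurjective (Sum.elim circ (Sum.elim (Function.uncurry leaf) centre)) <| by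
    rintro (m | ⟨i, j⟩ | i)
    exacts [⟨.inl m, rfl⟩, ⟨.inr (.inl (i, j)), rfl⟩, ⟨.inr (.inr i), rfl⟩]

noncomputable instance : DecidableRel (CG n).Adj := Classical.decRel _

noncomputable instance : DecidableRel (CG' n).Adj := Classical.decRel _

lemma adjMatrix_mulVec_circ {G : SimpleGraph (ClawVert n)} [DecidableRel G.Adj]
    {m p q : ZMod (6 * n)} (hpq : p ≠ q)
    (hG : ∀ x, G.Adj (circ m) (circ x) ↔ x = p ∨ x = q) (f : ClawVert n → R) :
    (G.adjMatrix R *ᵥ f) (circ m) = f (circ p) + f (circ q) +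
      ∑ v ∈ G.neighborFinset (circ m) with ∀ x, v ≠ circ x, f v := by
  have hcirc : {v ∈ G.neighborFinset (circ m) | ¬∀ x, v ≠ circ x} = {circ p, circ q} := by
    ext v
    cases v <;> simp [hG]
  rw [SimpleGraph.adjMatrix_mulVec_apply,
    ← Finset.sum_filter_not_add_sum_filter _ (fun v => ∀ x, v ≠ circ x), hcirc,
    Finset.sum_pair (by simpa using hpq)]

lemma CG_adjMatrix_mulVec_circ (f : ClawVert n → R) (m : ZMod (6 * n)) :
    ((CG n).adjMatrix R *ᵥ f) (circ m) = f (circ (m + 1)) + f (circ (m - 1)) +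
      ∑ v ∈ (CG n).neighborFinset (circ m) with ∀ x, v ≠ circ x, f v :=
  adjMatrix_mulVec_circ (ne_of_apply_ne _ (fold_add_one_ne_fold_sub_one m))
    (fun _ => CG_adj_circ_circ_iff) f

lemma CG'_adjMatrix_mulVec_circ (f : ClawVert n → R) (m : ZMod (6 * n)) :
    ((CG' n).adjMatrix R *ᵥ f) (circ m) =
      f (circ (sheetLift m (m + 1))) + f (circ (sheetLift m (m - 1))) +
        ∑ v ∈ (CG n).neighborFinset (circ m) with ∀ x, v ≠ circ x, f v := by
  have hne : sheetLift m (m + 1) ≠ sheetLift m (m - 1) := ne_of_apply_ne (fold n) <| by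
    simpa only [fold_sheetLift] using fold_add_one_ne_fold_sub_one m
  have hoff : {v ∈ (CG' n).neighborFinset (circ m) | ∀ x, v ≠ circ x} =
      {v ∈ (CG n).neighborFinset (circ m) | ∀ x, v ≠ circ x} := by
    ext v
    simp only [Finset.mem_filter, SimpleGraph.mem_neighborFinset]
    exact and_congr_left fun hv => CG'_adj_iff_CG_adj (Or.inr hv)
  rw [adjMatrix_mulVec_circ hne (fun _ => CG'_adj_circ_circ_iff), hoff]

lemma CG'_adjMatrix_mulVec_of_ne_circ (f : ClawVert n → R) {v : ClawVert n}
    (hv : ∀ m, v ≠ circ m) :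
    ((CG' n).adjMatrix R *ᵥ f) v = ((CG n).adjMatrix R *ᵥ f) v := by
  have hnbr : (CG' n).neighborFinset v = (CG n).neighborFinset v := by
    ext w
    simpa only [SimpleGraph.mem_neighborFinset] using CG'_adj_iff_CG_adj (Or.inl hv)
  simp only [SimpleGraph.adjMatrix_mulVec_apply, hnbr]

lemma CG'_adjMatrix_mulVec_eq_of_comp_antipode_eq {f : ClawVert n → R} (hf : f ∘ antipode = f) :
    (CG' n).adjMatrix R *ᵥ f = (CG n).adjMatrix R *ᵥ f := by
  have hlift (m x : ZMod (6 * n)) : f (circ (sheetLift m x)) = f (circ x) := by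
    unfold sheetLift
    split_ifs
    · rfl
    · exact congrFun hf (circ x)
  ext v
  cases v with
  | circ m => rw [CG_adjMatrix_mulVec_circ, CG'_adjMatrix_mulVec_circ, hlift, hlift]
  | leaf i j => exact CG'_adjMatrix_mulVec_of_ne_circ f (by simp)
  | centre i => exact CG'_adjMatrix_mulVec_of_ne_circ f (by simp)

lemma CG_adjMatrix_mulVec_comp_antipode {f : ClawVert n → R} (hf : f ∘ antipode = -f) :
    ((CG n).adjMatrix R *ᵥ f) ∘ antipode = -((CG n).adjMatrix R *ᵥ f) := by
  rw [← mulVec_neg, ← hf]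
  exact (adjMatrix_mulVec_comp_iso (antipodeIso n) f).symm

end AdjacencyMatrix

section Eigenvectors

variable {R : Type*} [CommRing R] [IsAddTorsionFree R]

lemma apply_eq_zero_of_comp_antipode_eq_neg {f : ClawVert n → R} (hf : f ∘ antipode = -f)
    {v : ClawVert n} (hv : ∀ m, v ≠ circ m) : f v = 0 := by
  have hfix : antipode v = v := by
    cases v with
    | circ m => exact absurd rfl (hv m)
    | _ => rfl
  have hneg : f (antipode v) = -f v := congrFun hf v
  rwa [hfix, self_eq_neg] at hneg

variable [NeZero n]

lemma eq_zero_of_mem_adjEigenspace_CG_of_comp_antipode_eq_neg {f : ClawVert n → R}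
    (hf : f ∈ adjEigenspace (CG n) 2) (hodd : f ∘ antipode = -f) : f = 0 := by
  have hharmonic (m : ZMod (6 * n)) :
      f (circ (m + 1)) + f (circ (m - 1)) = 2 • f (circ m) := by
    have hrow := congrFun (mem_adjEigenspace_iff.1 hf) (circ m)
    rw [CG_adjMatrix_mulVec_circ, Finset.sum_eq_zero fun v hv =>
      apply_eq_zero_of_comp_antipode_eq_neg hodd (Finset.mem_filter.1 hv).2, add_zero] at hrow
    rw [hrow, Pi.smul_apply, smul_eq_mul, nsmul_eq_mul, Nat.cast_ofNat]
  ext v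
  cases v with
  | circ m =>
    have hneg : f (circ (m + half n)) = -f (circ m) := congrFun hodd (circ m)
    have hconst : f (circ m) = f (circ (m + half n)) :=
      eq_of_forall_harmonic (g := fun x => f (circ x)) hharmonic m (m + half n)
    exact self_eq_neg.1 (hconst.trans hneg)
  | _ => exact apply_eq_zero_of_comp_antipode_eq_neg hodd (by simp)

lemma comp_antipode_eq_of_mem_adjEigenspace_CG {f : ClawVert n → R}
    (hf : f ∈ adjEigenspace (CG n) 2) : f ∘ antipode = f := by
  have hmem : f ∘ antipode - f ∈ adjEigenspace (CG n) 2 :=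
    sub_mem ((comp_iso_mem_adjEigenspace_iff (antipodeIso n)).2 hf) hf
  have hodd : (f ∘ antipode - f) ∘ antipode = -(f ∘ antipode - f) := by
    rw [neg_sub, Pi.sub_comp, Function.comp_assoc, antipode_involutive.comp_self,
      Function.comp_id]
  exact sub_eq_zero.1 (eq_zero_of_mem_adjEigenspace_CG_of_comp_antipode_eq_neg hmem hodd)

/-- The vector equal to `1` and `-1` on the two `3n`-cycles of `CG'(n)` and to `0` elsewhere, which
is the eigenvector that `CG(n)` lacks. -/
def sheetVec : ClawVert n → ℚ
  | circ m => sheetSign m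
  | _ => 0

lemma sheetVec_comp_antipode : sheetVec (n := n) ∘ antipode = -sheetVec := by
  ext v
  cases v with
  | circ m => exact sheetSign_add_half m
  | _ => exact neg_zero.symm

lemma sheetVec_mem_adjEigenspace_CG' : sheetVec ∈ adjEigenspace (CG' n) 2 := by
  rw [mem_adjEigenspace_iff]
  ext v
  by_cases hv : ∀ m, v ≠ circ m
  · rw [CG'_adjMatrix_mulVec_of_ne_circ _ hv, Pi.smul_apply,
      apply_eq_zero_of_comp_antipode_eq_neg sheetVec_comp_antipode hv, smul_zero,
      apply_eq_zero_of_comp_antipode_eq_neg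
        (CG_adjMatrix_mulVec_comp_antipode sheetVec_comp_antipode) hv]
  · push Not at hv
    obtain ⟨m, rfl⟩ := hv
    rw [CG'_adjMatrix_mulVec_circ, Finset.sum_eq_zero fun v hv =>
      apply_eq_zero_of_comp_antipode_eq_neg sheetVec_comp_antipode (Finset.mem_filter.1 hv).2]
    simp only [sheetVec, sheetSign_sheetLift, add_zero, Pi.smul_apply, smul_eq_mul, two_mul]

lemma adjEigenspace_CG_lt_adjEigenspace_CG' :
    adjEigenspace (CG n) (2 : ℚ) < adjEigenspace (CG' n) 2 := by
  refine SetLike.lt_iff_le_and_exists.2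
    ⟨fun f hf => ?_, sheetVec, sheetVec_mem_adjEigenspace_CG', fun h => ?_⟩
  · rw [mem_adjEigenspace_iff, CG'_adjMatrix_mulVec_eq_of_comp_antipode_eq
      (comp_antipode_eq_of_mem_adjEigenspace_CG hf)]
    exact mem_adjEigenspace_iff.1 hf
  · have hsymm := comp_antipode_eq_of_mem_adjEigenspace_CG h
    rw [sheetVec_comp_antipode] at hsymm
    exact sheetSign_ne_zero 0 (self_eq_neg.1 (congrFun hsymm (circ 0)).symm)

end Eigenvectors

end ClawGraph

/-- For every `n ≥ 1`, the claw graph `CG(n)` and its companion `CG'(n)` are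
not isomorphic as simple graphs. -/
theorem claw_not_isomorphic (n : ℕ) (hn : 1 ≤ n) :
    IsEmpty (CG n ≃g CG' n) := by
  have : NeZero n := ⟨Nat.one_le_iff_ne_zero.1 hn⟩
  refine ⟨fun φ => ?_⟩
  have hlt : Module.finrank ℚ (ClawGraph.adjEigenspace (CG n) (2 : ℚ)) <
      Module.finrank ℚ (ClawGraph.adjEigenspace (CG' n) (2 : ℚ)) :=
    Submodule.finrank_lt_finrank_of_lt ClawGraph.adjEigenspace_CG_lt_adjEigenspace_CG'
  exact hlt.ne (ClawGraph.finrank_adjEigenspace_eq_of_iso φ 2)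
end

section
/- For every even natural number n ≥ 2, both the claw graph CG(n) and its companion CG'(n) are bipartite (2-colorable). -/
/-!
For even `n`, every edge of either graph joins vertices of opposite parity, where `u_m` has the
parity of `m`, `c_i` that of `i`, and `ℓ_{i,j}` that of `i + 1`. Multiples of `n` vanish mod 2, so
both circuit neighbours `i + jn` and `i + jn + 3n` of `ℓ_{i,j}` have the parity of `i`; and the
`3n`-cycles of the companion have even length, so parity alternates along them too.
-/

theorem colorable_card_fromRel_of_ne {V α : Type*} [Fintype α] {r : V → V → Prop} (c : V → α)
    (hc : ∀ ⦃v w⦄, r v w → c v ≠ c w) :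
    (SimpleGraph.fromRel r).Colorable (Fintype.card α) := by
  refine (SimpleGraph.Coloring.mk c fun {v w} hvw ↦ ?_).colorable
  rcases ((SimpleGraph.fromRel_adj r v w).1 hvw).2 with h | h
  · exact hc h
  · exact (hc h).symm

theorem colorable_two_fromRel_of_eq_add_one {V : Type*} {r : V → V → Prop} (c : V → ZMod 2)
    (hc : ∀ ⦃v w⦄, r v w → c w = c v + 1) : (SimpleGraph.fromRel r).Colorable 2 :=
  colorable_card_fromRel_of_ne c fun _ _ h ↦ by simp [hc h]

/-- The parity of a circuit index, well defined because the circuit indices live modulo the even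
number `6n`. -/
def circuitParity (n : ℕ) : ZMod (6 * n) →+* ZMod 2 :=
  ZMod.castHom (Dvd.dvd.mul_right (by decide) n) (ZMod 2)

/-- The two-colouring shared by `CG(n)` and `CG'(n)` for even `n`. The leaves are shifted by one so
that every pair related by `cgRel` or `cgRel'` has its parity raised by one. -/
def clawParity (n : ℕ) : ClawVert n → ZMod 2
  | .circ m => circuitParity n m
  | .leaf i _ => (i : ℕ) + 1
  | .centre i => (i : ℕ)

section Parity

variable {n : ℕ}

theorem circuitParity_eq_val [NeZero n] (m : ZMod (6 * n)) :
    circuitParity n m = (m.val : ZMod 2) := by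
  rw [circuitParity, ZMod.castHom_apply, ZMod.natCast_val]

theorem circuitParity_add_mul_of_even (hn : Even n) (i j : ℕ) :
    circuitParity n (i + j * n) = i := by
  simp [hn.natCast_zmod_two]

theorem circuitParity_add_mul_add_three_mul_of_even (hn : Even n) (i j : ℕ) :
    circuitParity n (i + j * n + (3 * n : ℕ)) = i := by
  rw [map_add, circuitParity_add_mul_of_even hn, map_natCast,
    (hn.mul_left 3).natCast_zmod_two, add_zero]

theorem circuitParity_eq_add_one_of_val_mod [NeZero n] (hn : Even n) {m m' : ZMod (6 * n)}
    (h : m'.val % (3 * n) = (m.val % (3 * n) + 1) % (3 * n)) :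
    circuitParity n m' = circuitParity n m + 1 := by
  have hmod : m'.val ≡ m.val + 1 [MOD 3 * n] := h.trans (Nat.mod_add_mod ..)
  have hmod_two : m'.val ≡ m.val + 1 [MOD 2] := hmod.of_dvd (hn.mul_left 3).two_dvd
  rw [circuitParity_eq_val, circuitParity_eq_val]
  exact_mod_cast (ZMod.natCast_eq_natCast_iff ..).2 hmod_two

theorem clawParity_circ_eq_leaf_add_one (hn : Even n) {i : Fin n} {j : Fin 3} {m : ZMod (6 * n)}
    (hm : m = (i : ℕ) + (j : ℕ) * n ∨ m = (i : ℕ) + (j : ℕ) * n + (3 * n : ℕ)) :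
    clawParity n (.circ m) = clawParity n (.leaf i j) + 1 := by
  have hparity : circuitParity n m = (i : ℕ) := by
    rcases hm with rfl | rfl
    · exact circuitParity_add_mul_of_even hn i j
    · exact circuitParity_add_mul_add_three_mul_of_even hn i j
  rw [clawParity, clawParity, hparity, add_assoc, CharTwo.add_self_eq_zero, add_zero]

theorem clawParity_eq_add_one_of_cgRel (hn : Even n) :
    ∀ ⦃v w : ClawVert n⦄, cgRel n v w → clawParity n w = clawParity n v + 1
  | .circ m, .circ _, rfl => by simp only [clawParity, map_add, map_one]
  | .centre _, .leaf _ _, rfl => rfl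
  | .leaf _ _, .circ _, hm => clawParity_circ_eq_leaf_add_one hn hm

theorem clawParity_eq_add_one_of_cgRel' [NeZero n] (hn : Even n) :
    ∀ ⦃v w : ClawVert n⦄, cgRel' n v w → clawParity n w = clawParity n v + 1
  | .circ _, .circ _, ⟨_, h⟩ => circuitParity_eq_add_one_of_val_mod hn h
  | .centre _, .leaf _ _, rfl => rfl
  | .leaf _ _, .circ _, hm => clawParity_circ_eq_leaf_add_one hn hm

end Parity

/-- For every even `n ≥ 2`, both `CG(n)` and `CG'(n)` are bipartite. -/
theorem claw_bipartite_of_even (n : ℕ) (hn : 2 ≤ n) (heven : Even n) :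
    (CG n).Colorable 2 ∧ (CG' n).Colorable 2 := by
  have : NeZero n := ⟨by omega⟩
  constructor
  · exact colorable_two_fromRel_of_eq_add_one _ (clawParity_eq_add_one_of_cgRel heven)
  · exact colorable_two_fromRel_of_eq_add_one _ (clawParity_eq_add_one_of_cgRel' heven)
end

section
/- For every even natural number n ≥ 2, the canonical double covers CDC(CG(n)) and CDC(CG'(n)) of the claw graph CG(n) and its companion CG'(n) are not isomorphic as simple graphs; equivalently, CG(n) and CG'(n) are not TF-isomorphic. -/
/-!
Both graphs carry the half-turn `u_m ↦ u_{m + 3n}`, and they become equal after identifying each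
`u_m` with `u_{m + 3n}`. Hence the half-turn invariant part of the adjacency operator is the same
for both graphs, and the same holds for their canonical double covers. A half-turn antisymmetric
function vanishes on leaves and centres, so it only sees the circuit edges. On the double cover of
`CG(n)`, an antisymmetric function in the `2`-eigenspace is affine along the orbits of
`(m, b) ↦ (m + 1, !b)`, and for even `n` the half-turn is the `3n`-th iterate of this map, so
antisymmetry forces the function to vanish. On the double cover of `CG'(n)`, the function equal to
`1` on one `3n`-cycle and `-1` on the other is such an eigenvector. So the eigenvalue `2` has
greater multiplicity for `CG'(n)`.
-/

open Function

section Iterate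

variable {α M : Type*} [AddCommGroup M] [IsAddTorsionFree M] {T : α → α} {g : α → M} {p : ℕ}

theorem eq_zero_of_comp_eq_of_iterate_eq_neg (hinv : g ∘ T = g)
    (hneg : ∀ x, g (T^[p] x) = -g x) : g = 0 := by
  funext x
  exact self_eq_neg.1 ((congrFun (iterate_invariant hinv p) x).symm.trans (hneg x))

theorem eq_zero_of_add_eq_two_nsmul_of_iterate_eq_neg
    (hlin : ∀ x, g (T (T x)) + g x = 2 • g (T x)) (hneg : ∀ x, g (T^[p] x) = -g x) : g = 0 := by
  have hdiff : (fun x ↦ g (T x) - g x) = 0 := by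
    refine eq_zero_of_comp_eq_of_iterate_eq_neg (T := T) (p := p) (funext fun x ↦ ?_) fun x ↦ ?_
    · have := hlin x
      simp only [comp_apply]
      rw [sub_eq_sub_iff_add_eq_add, this, two_nsmul]
    · rw [← iterate_succ_apply' T, iterate_succ_apply, hneg, hneg]
      abel
  exact eq_zero_of_comp_eq_of_iterate_eq_neg (funext fun x ↦ sub_eq_zero.1 (congrFun hdiff x)) hneg

end Iterate

section AdjEigenspace

variable {V W : Type*} {G : SimpleGraph V} {H : SimpleGraph W}

/-- Two bijections `α`, `β` with `x ~ y ↔ α x ~ β y` form a two-fold isomorphism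
(TF-isomorphism) from `G` to `H`; this is the isomorphism of canonical double covers that
acts as `α` on the layer `false` and as `β` on the layer `true`. -/
def cdcIsoOfTwoFold (α β : V ≃ W) (h : ∀ x y, G.Adj x y ↔ H.Adj (α x) (β y)) :
    CDC G ≃g CDC H where
  toEquiv := Equiv.prodCongrLeft fun b ↦ bif b then β else α
  map_rel_iff' := by
    have h' (x y : V) : H.Adj (β x) (α y) ↔ G.Adj x y := by
      rw [H.adj_comm, ← h, G.adj_comm]
    rintro ⟨x, _ | _⟩ ⟨y, _ | _⟩ <;> simp [CDC, ← h, h']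

variable {R : Type*} [CommRing R] [Fintype V] [Fintype W] {μ : R}

open Classical in
theorem sum_adj_comp_iso {M : Type*} [AddCommMonoid M] (e : G ≃g H) (f : W → M) (v : V) :
    ∑ w with G.Adj v w, f (e w) = ∑ w with H.Adj (e v) w, f w :=
  Finset.sum_equiv e.toEquiv (by simp [e.map_adj_iff]) fun _ _ ↦ rfl

open Classical in
theorem sum_adj_eq_zero_of_comp_eq_neg {M : Type*} [AddCommGroup M] [IsAddTorsionFree M]
    (e : G ≃g G) {f : V → M} (hf : ∀ w, f (e w) = -f w) {v : V} (hv : e v = v) :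
    ∑ w with G.Adj v w, f w = 0 := by
  have h := sum_adj_comp_iso e f v
  simp only [hf, Finset.sum_neg_distrib, hv] at h
  exact self_eq_neg.1 h.symm

open Classical in
theorem sum_cdc_adj {M : Type*} [AddCommMonoid M] (f : V × Bool → M) (v : V) (b : Bool) :
    ∑ y with (CDC G).Adj (v, b) y, f y = ∑ w with G.Adj v w, f (w, !b) := by
  simp only [Finset.sum_filter, Fintype.sum_prod_type]
  cases b <;> simp [CDC]

open Classical in
/-- The space of eigenvectors of the adjacency matrix of `G` for the eigenvalue `μ`. -/
noncomputable def adjEigenspace (G : SimpleGraph V) (μ : R) : Submodule R (V → R) :=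
  Module.End.eigenspace (Matrix.toLin' (G.adjMatrix R)) μ

open Classical in
theorem mem_adjEigenspace {f : V → R} :
    f ∈ adjEigenspace G μ ↔ ∀ v, ∑ w with G.Adj v w, f w = μ * f v := by
  simp [adjEigenspace, funext_iff, SimpleGraph.adjMatrix_mulVec_apply,
    SimpleGraph.neighborFinset_eq_filter]

open Classical in
theorem mem_adjEigenspace_cdc {f : V × Bool → R} :
    f ∈ adjEigenspace (CDC G) μ ↔
      ∀ v b, ∑ w with G.Adj v w, f (w, !b) = μ * f (v, b) := by
  simp only [mem_adjEigenspace, Prod.forall, sum_cdc_adj]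

open Classical in
theorem comp_iso_mem_adjEigenspace (e : G ≃g H) {f : W → R} :
    f ∘ e ∈ adjEigenspace G μ ↔ f ∈ adjEigenspace H μ := by
  simp only [mem_adjEigenspace, comp_apply, sum_adj_comp_iso]
  exact (e.surjective.forall (p := fun v ↦ ∑ w with H.Adj v w, f w = μ * f v)).symm

theorem finrank_adjEigenspace_congr (e : G ≃g H) :
    Module.finrank R (adjEigenspace G μ) = Module.finrank R (adjEigenspace H μ) := by
  have hcomap : (adjEigenspace G μ).comap (LinearEquiv.funCongrLeft R R e.toEquiv).toLinearMap =
      adjEigenspace H μ :=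
    Submodule.ext fun _ ↦ comp_iso_mem_adjEigenspace e
  rw [← hcomap]
  exact (LinearEquiv.ofSubmodule' _ _).finrank_eq.symm

end AdjEigenspace

section ClawGraph

variable {n : ℕ}

/-- The claw graph with the edges of `CG(n)` at leaves and centres, and with circuit edges
`u_m ~ u_{s m}` for a given permutation `s` of the circuit indices. It is `CG(n)` when
`s m = m + 1` and `CG'(n)` when `s` is `splitRotation n`. -/
def clawGraph (n : ℕ) (s : Equiv.Perm (ZMod (6 * n))) : SimpleGraph (ClawVert n) :=
  SimpleGraph.fromRel fun
    | .circ m, .circ m' => m' = s m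
    | v, w => cgRel n v w

variable {s : Equiv.Perm (ZMod (6 * n))}

theorem clawGraph_adj_circ_circ (hs : ∀ m, s m ≠ m) {m m' : ZMod (6 * n)} :
    (clawGraph n s).Adj (.circ m) (.circ m') ↔ m' = s m ∨ m' = s.symm m := by
  simp only [clawGraph, SimpleGraph.fromRel_adj, ne_eq, ClawVert.circ.injEq, Equiv.eq_symm_apply,
    eq_comm (a := m) (b := s m'), and_iff_right_iff_imp]
  rintro h rfl
  exact hs m (by tauto)

theorem clawGraph_adj_circ_leaf {m : ZMod (6 * n)} {i : Fin n} {j : Fin 3} :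
    (clawGraph n s).Adj (.circ m) (.leaf i j) ↔ cgRel n (.leaf i j) (.circ m) := by
  simp [clawGraph, cgRel]

theorem not_clawGraph_adj_circ_centre {m : ZMod (6 * n)} {i : Fin n} :
    ¬(clawGraph n s).Adj (.circ m) (.centre i) := by
  simp [clawGraph, cgRel]

theorem CG_eq_clawGraph : CG n = clawGraph n (Equiv.addRight 1) := by
  unfold CG clawGraph
  congr 1
  funext v w
  cases v <;> cases w <;> rfl

/-- The index shift `3n` of the half-turn of the circuit. -/
def halfShift (n : ℕ) : ZMod (6 * n) := (3 * n : ℕ)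

theorem halfShift_add_halfShift : halfShift n + halfShift n = 0 := by
  rw [halfShift, ← Nat.cast_add, show 3 * n + 3 * n = 6 * n by ring, ZMod.natCast_self]

theorem add_halfShift_eq_iff {x y : ZMod (6 * n)} : x + halfShift n = y ↔ x = y + halfShift n := by
  rw [← eq_sub_iff_add_eq, sub_eq_add_neg, neg_eq_of_add_eq_zero_left halfShift_add_halfShift]

theorem cgRel_leaf_circ_add_halfShift {i : Fin n} {j : Fin 3} {m : ZMod (6 * n)} :
    cgRel n (.leaf i j) (.circ (m + halfShift n)) ↔ cgRel n (.leaf i j) (.circ m) := by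
  change (_ ∨ _ = _ + halfShift n) ↔ (_ ∨ _ = _ + halfShift n)
  rw [add_left_inj, add_halfShift_eq_iff, or_comm]

/-- The half-turn `u_m ↦ u_{m + 3n}` of the circuit, fixing leaves and centres. -/
def halfTurn (n : ℕ) : ClawVert n → ClawVert n
  | .circ m => .circ (m + halfShift n)
  | v => v

theorem halfTurn_involutive : Involutive (halfTurn n) := by
  rintro (m | _ | _) <;> simp [halfTurn, add_assoc, halfShift_add_halfShift]

/-- The half-turn as an automorphism of a claw graph whose circuit permutation commutes with it. -/
def halfTurnIso (hcomm : ∀ m, s (m + halfShift n) = s m + halfShift n) :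
    clawGraph n s ≃g clawGraph n s where
  toEquiv := halfTurn_involutive.toPerm
  map_rel_iff' := by
    have hcl (m) (i) (j) : ¬cgRel n (.circ m) (.leaf i j) := id
    have hcc (m) (i) : ¬cgRel n (.circ m) (.centre i) := id
    have hcc' (m) (i) : ¬cgRel n (.centre i) (.circ m) := id
    rintro (_ | _ | _) (_ | _ | _) <;>
      simp [clawGraph, halfTurn, hcomm, cgRel_leaf_circ_add_halfShift, hcl, hcc, hcc']

/-- The equivalence splitting the vertices of a claw graph into circuit vertices, leaves and
centres. -/
def clawVertEquiv (n : ℕ) : ClawVert n ≃ ZMod (6 * n) ⊕ (Fin n × Fin 3) ⊕ Fin n where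
  toFun
    | .circ m => .inl m
    | .leaf i j => .inr (.inl (i, j))
    | .centre i => .inr (.inr i)
  invFun
    | .inl m => .circ m
    | .inr (.inl p) => .leaf p.1 p.2
    | .inr (.inr i) => .centre i
  left_inv := by rintro (_ | _ | _) <;> rfl
  right_inv := by rintro (_ | _ | _) <;> rfl

variable [NeZero n]

instance : Fintype (ClawVert n) := Fintype.ofEquiv _ (clawVertEquiv n).symm

theorem sum_clawVert {M : Type*} [AddCommMonoid M] (f : ClawVert n → M) :
    ∑ v, f v =
      ∑ m, f (.circ m) + (∑ p : Fin n × Fin 3, f (.leaf p.1 p.2) + ∑ i, f (.centre i)) := by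
  rw [← (clawVertEquiv n).symm.sum_comp, Fintype.sum_sum_type, Fintype.sum_sum_type]
  rfl

open Classical in
theorem sum_clawGraph_adj_circ {M : Type*} [AddCommMonoid M] (hs : ∀ m, s (s m) ≠ m)
    (f : ClawVert n → M) (m : ZMod (6 * n)) :
    ∑ w with (clawGraph n s).Adj (.circ m) w, f w =
      f (.circ (s m)) + f (.circ (s.symm m)) +
        ∑ p : Fin n × Fin 3 with cgRel n (.leaf p.1 p.2) (.circ m), f (.leaf p.1 p.2) := by
  have hne : s m ≠ s.symm m := fun h ↦ hs m ((Equiv.eq_symm_apply s).1 h)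
  have hadj (m') := clawGraph_adj_circ_circ (m := m) (m' := m') fun m h ↦ hs m (by rw [h, h])
  have hcirc : Finset.univ.filter (fun m' ↦ (clawGraph n s).Adj (.circ m) (.circ m')) =
      {s m, s.symm m} := by
    ext m'
    simp [hadj]
  rw [← Finset.sum_pair (f := fun m ↦ f (.circ m)) hne, ← hcirc, Finset.sum_filter, sum_clawVert]
  simp [clawGraph_adj_circ_leaf, not_clawGraph_adj_circ_centre, Finset.sum_filter]

open Classical in
theorem sum_clawGraph_adj_congr {t : Equiv.Perm (ZMod (6 * n))} {M : Type*} [AddCommMonoid M]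
    (hs : ∀ m, s (s m) ≠ m) (ht : ∀ m, t (t m) ≠ m) {f : ClawVert n → M}
    (hnext : ∀ m, f (.circ (s m)) = f (.circ (t m)))
    (hprev : ∀ m, f (.circ (s.symm m)) = f (.circ (t.symm m))) (v : ClawVert n) :
    ∑ w with (clawGraph n s).Adj v w, f w = ∑ w with (clawGraph n t).Adj v w, f w := by
  rcases v with m | ⟨i, j⟩ | i
  · rw [sum_clawGraph_adj_circ hs, sum_clawGraph_adj_circ ht, hnext, hprev]
  all_goals
    refine Finset.sum_congr (Finset.filter_congr fun w _ ↦ ?_) fun _ _ ↦ rfl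
    cases w <;> simp [clawGraph]

variable {R : Type*} [CommRing R]

theorem comp_halfTurn_mem_adjEigenspace_cdc {μ : R}
    (hcomm : ∀ m, s (m + halfShift n) = s m + halfShift n) {f : ClawVert n × Bool → R}
    (hf : f ∈ adjEigenspace (CDC (clawGraph n s)) μ) :
    (fun x ↦ f (halfTurn n x.1, x.2)) ∈ adjEigenspace (CDC (clawGraph n s)) μ := by
  let σ := halfTurnIso hcomm
  convert (comp_iso_mem_adjEigenspace (cdcIsoOfTwoFold σ.toEquiv σ.toEquiv
    fun _ _ ↦ σ.map_adj_iff.symm)).2 hf using 1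
  funext ⟨v, b⟩
  cases b <;> rfl

variable [IsAddTorsionFree R]

theorem mem_adjEigenspace_cdc_of_antisymmetric {μ : R} (hs : ∀ m, s (s m) ≠ m)
    (hcomm : ∀ m, s (m + halfShift n) = s m + halfShift n) {f : ClawVert n × Bool → R}
    (hf : ∀ v b, f (halfTurn n v, b) = -f (v, b)) :
    f ∈ adjEigenspace (CDC (clawGraph n s)) μ ↔
      ∀ m b, f (.circ (s m), !b) + f (.circ (s.symm m), !b) = μ * f (.circ m, b) := by
  have hfix {v : ClawVert n} (hv : halfTurn n v = v) (b : Bool) : f (v, b) = 0 :=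
    self_eq_neg.1 (by rw [← hf, hv])
  have hsum {v : ClawVert n} (hv : halfTurn n v = v) (b : Bool) :=
    sum_adj_eq_zero_of_comp_eq_neg (halfTurnIso hcomm) (f := fun w ↦ f (w, b)) (hf · b) hv
  rw [mem_adjEigenspace_cdc]
  refine ⟨fun h m b ↦ ?_, fun h v b ↦ ?_⟩
  · rw [← h, sum_clawGraph_adj_circ hs, Finset.sum_eq_zero fun p _ ↦ hfix rfl _, add_zero]
  · rcases v with m | ⟨i, j⟩ | i
    · rw [sum_clawGraph_adj_circ hs, Finset.sum_eq_zero fun p _ ↦ hfix rfl _, add_zero, h]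
    all_goals rw [hsum rfl, hfix rfl, mul_zero]

theorem apply_halfTurn_of_mem_adjEigenspace_cdc_two (hs : ∀ m, s (s m) ≠ m) {p : ℕ} (hp : Even p)
    (hhalf : ∀ m, s^[p] m = m + halfShift n) {f : ClawVert n × Bool → R}
    (hf : f ∈ adjEigenspace (CDC (clawGraph n s)) 2) (v : ClawVert n) (b : Bool) :
    f (halfTurn n v, b) = f (v, b) := by
  have hcomm (m) : s (m + halfShift n) = s m + halfShift n := by
    rw [← hhalf, ← hhalf, ← iterate_succ_apply' s, iterate_succ_apply]
  let g : ClawVert n × Bool → R := f - fun x ↦ f (halfTurn n x.1, x.2)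
  have hanti (v) (b) : g (halfTurn n v, b) = -g (v, b) := by
    simp [g, halfTurn_involutive v]
  have hg := (mem_adjEigenspace_cdc_of_antisymmetric hs hcomm hanti).1
    (sub_mem hf (comp_halfTurn_mem_adjEigenspace_cdc hcomm hf))
  have hiter (m) (b) : (Prod.map s not)^[p] (m, b) = (m + halfShift n, b) := by
    rw [Prod.map_iterate, Bool.involutive_not.iterate_even hp, Prod.map_apply, hhalf, id]
  have hzero : (fun x : ZMod (6 * n) × Bool ↦ g (.circ x.1, x.2)) = 0 := by
    refine eq_zero_of_add_eq_two_nsmul_of_iterate_eq_neg (T := Prod.map s not) (p := p) ?_ ?_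
    · rintro ⟨m, b⟩
      simpa using hg (s m) (!b)
    · rintro ⟨m, b⟩
      rw [hiter]
      exact hanti (.circ m) b
  rcases v with m | _ | _
  · exact (sub_eq_zero.1 (congrFun hzero (m, b))).symm
  all_goals rfl

end ClawGraph

section Circuits

variable {n : ℕ}

/-- The rotation `m ↦ m + 1` followed by the transposition of `0` and `3n`. The transposition
splits the `6n`-cycle into the two `3n`-cycles that form the circuit of `CG'(n)`. -/
def splitRotation (n : ℕ) : Equiv.Perm (ZMod (6 * n)) :=
  (Equiv.addRight 1).trans (Equiv.swap 0 (halfShift n))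

theorem splitRotation_apply (m : ZMod (6 * n)) :
    splitRotation n m = Equiv.swap 0 (halfShift n) (m + 1) :=
  rfl

theorem swap_zero_halfShift_eq_or (m : ZMod (6 * n)) :
    Equiv.swap 0 (halfShift n) m = m ∨ Equiv.swap 0 (halfShift n) m = m + halfShift n := by
  rw [Equiv.swap_apply_def]
  split_ifs with h0 h
  · exact .inr (by rw [h0, zero_add])
  · exact .inr (by rw [h, halfShift_add_halfShift])
  · exact .inl rfl

theorem splitRotation_add_halfShift (m : ZMod (6 * n)) :
    splitRotation n (m + halfShift n) = splitRotation n m + halfShift n := by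
  have h := (add_left_injective (halfShift n)).swap_apply 0 (halfShift n) (m + 1)
  rw [zero_add, halfShift_add_halfShift, Equiv.swap_comm] at h
  rw [splitRotation_apply, splitRotation_apply, add_right_comm, h]

theorem splitRotation_eq_or (m : ZMod (6 * n)) :
    splitRotation n m = m + 1 ∨ splitRotation n m = m + 1 + halfShift n :=
  swap_zero_halfShift_eq_or (m + 1)

theorem splitRotation_symm_eq_or (m : ZMod (6 * n)) :
    (splitRotation n).symm m = m - 1 ∨ (splitRotation n).symm m = m - 1 + halfShift n := by
  have h : (splitRotation n).symm m = Equiv.swap 0 (halfShift n) m - 1 := by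
    simp [splitRotation, sub_eq_add_neg]
  rw [h, sub_add_eq_add_sub]
  exact (swap_zero_halfShift_eq_or m).imp (congrArg (· - 1)) (congrArg (· - 1))

variable [NeZero n]

theorem val_halfShift : (halfShift n).val = 3 * n :=
  ZMod.val_cast_of_lt (by have := NeZero.pos n; omega)

theorem val_add_halfShift (m : ZMod (6 * n)) :
    (m + halfShift n).val = if m.val < 3 * n then m.val + 3 * n else m.val - 3 * n := by
  have := m.val_lt
  split_ifs with h
  · rw [ZMod.val_add_of_lt] <;> rw [val_halfShift]; omega
  · rw [ZMod.val_add_of_le] <;> rw [val_halfShift] <;> omega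

theorem val_two_zmod_six_mul : (2 : ZMod (6 * n)).val = 2 := by
  have := NeZero.pos n
  rw [ZMod.val_two_eq_two_mod, Nat.mod_eq_of_lt (by omega)]

theorem two_ne_zero_zmod_six_mul : (2 : ZMod (6 * n)) ≠ 0 := fun h ↦ by
  simpa [val_two_zmod_six_mul] using congrArg ZMod.val h

theorem two_ne_halfShift : (2 : ZMod (6 * n)) ≠ halfShift n := fun h ↦ by
  have := congrArg ZMod.val h
  rw [val_two_zmod_six_mul, val_halfShift] at this
  omega

theorem add_one_add_one_ne (m : ZMod (6 * n)) : m + 1 + 1 ≠ m := by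
  rw [add_assoc, one_add_one_eq_two, Ne, add_eq_left]
  exact two_ne_zero_zmod_six_mul

theorem splitRotation_splitRotation_ne (m : ZMod (6 * n)) :
    splitRotation n (splitRotation n m) ≠ m := by
  intro h
  have h2 : splitRotation n m + 1 = Equiv.swap 0 (halfShift n) m := Equiv.swap_apply_eq_iff.1 h
  have hh := halfShift_add_halfShift (n := n)
  rcases splitRotation_eq_or m with hm | hm <;>
    rcases swap_zero_halfShift_eq_or m with hm' | hm' <;> rw [hm, hm'] at h2
  · exact two_ne_zero_zmod_six_mul (by linear_combination h2)
  · exact two_ne_halfShift (by linear_combination h2)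
  · exact two_ne_halfShift (by linear_combination h2 - hh)
  · exact two_ne_zero_zmod_six_mul (by linear_combination h2)

theorem val_splitRotation (m : ZMod (6 * n)) :
    (splitRotation n m).val =
      if m.val + 1 = 3 * n then 0 else if m.val + 1 = 6 * n then 3 * n else m.val + 1 := by
  have hn := NeZero.pos n
  have hm := m.val_lt
  have : Fact (1 < 6 * n) := ⟨by omega⟩
  have h1 : (m + 1).val = if m.val + 1 = 6 * n then 0 else m.val + 1 := by
    rw [ZMod.val_add, ZMod.val_one]
    split_ifs with h
    · rw [h, Nat.mod_self]
    · exact Nat.mod_eq_of_lt (by omega)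
  rw [splitRotation_apply, Equiv.swap_apply_def]
  simp only [← (ZMod.val_injective (6 * n)).eq_iff, val_halfShift, ZMod.val_zero,
    apply_ite ZMod.val]
  split_ifs at h1 ⊢ <;> omega

theorem val_splitRotation_lt_iff (m : ZMod (6 * n)) :
    (splitRotation n m).val < 3 * n ↔ m.val < 3 * n := by
  have := m.val_lt
  rw [val_splitRotation]
  split_ifs <;> omega

theorem val_splitRotation_mod (m : ZMod (6 * n)) :
    (splitRotation n m).val % (3 * n) = (m.val % (3 * n) + 1) % (3 * n) := by
  rw [Nat.mod_add_mod, val_splitRotation]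
  split_ifs with h h
  · rw [h, Nat.zero_mod, Nat.mod_self]
  · rw [h, Nat.mod_self, show 6 * n = 2 * (3 * n) by ring, Nat.mul_mod_left]
  · rfl

theorem val_div_three_mul_eq_ite (m : ZMod (6 * n)) :
    m.val / (3 * n) = if m.val < 3 * n then 0 else 1 := by
  have := m.val_lt
  split_ifs with h
  · exact Nat.div_eq_of_lt h
  · exact Nat.div_eq_of_lt_le (by omega) (by omega)

theorem cgRel'_circ_circ_iff {m m' : ZMod (6 * n)} :
    cgRel' n (.circ m) (.circ m') ↔ m' = splitRotation n m := by
  have hdiv : (splitRotation n m).val / (3 * n) = m.val / (3 * n) := by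
    simp only [val_div_three_mul_eq_ite, val_splitRotation_lt_iff]
  refine ⟨fun ⟨h1, h2⟩ ↦ ZMod.val_injective _ ?_, ?_⟩
  · rw [← Nat.div_add_mod m'.val (3 * n), ← h1, h2, ← hdiv, ← val_splitRotation_mod,
      Nat.div_add_mod]
  · rintro rfl
    exact ⟨hdiv.symm, val_splitRotation_mod m⟩

theorem CG'_eq_clawGraph : CG' n = clawGraph n (splitRotation n) := by
  unfold CG' clawGraph
  congr 1
  funext v w
  cases v <;> cases w <;> first | rfl | exact propext cgRel'_circ_circ_iff

end Circuits

section Spectrum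

variable {n : ℕ} [NeZero n] {R : Type*} [CommRing R]

/-- The eigenvector separating `CG'(n)` from `CG(n)`: it takes the values `1` and `-1` on the two
circuits of `CG'(n)`, and `0` on leaves and centres. -/
def circuitSign (R : Type*) [CommRing R] (n : ℕ) : ClawVert n → R
  | .circ m => if m.val < 3 * n then 1 else -1
  | _ => 0

theorem circuitSign_halfTurn (v : ClawVert n) :
    circuitSign R n (halfTurn n v) = -circuitSign R n v := by
  rcases v with m | _ | _
  · have := m.val_lt
    simp only [circuitSign, halfTurn, val_add_halfShift]
    split_ifs <;> first | omega | simp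
  all_goals simp [circuitSign, halfTurn]

variable [IsAddTorsionFree R]

theorem apply_halfTurn_of_mem_adjEigenspace_cdc_CG (heven : Even n) {f : ClawVert n × Bool → R}
    (hf : f ∈ adjEigenspace (CDC (CG n)) 2) (v : ClawVert n) (b : Bool) :
    f (halfTurn n v, b) = f (v, b) := by
  rw [CG_eq_clawGraph] at hf
  exact apply_halfTurn_of_mem_adjEigenspace_cdc_two add_one_add_one_ne (heven.mul_left 3)
    (fun m ↦ by simp [halfShift]) hf v b

theorem adjEigenspace_cdc_CG_le (heven : Even n) :
    adjEigenspace (CDC (CG n)) (2 : R) ≤ adjEigenspace (CDC (CG' n)) 2 := by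
  intro f hf
  have hinv (m) (b) : f (.circ (m + halfShift n), b) = f (.circ m, b) :=
    apply_halfTurn_of_mem_adjEigenspace_cdc_CG heven hf (.circ m) b
  rw [mem_adjEigenspace_cdc, CG_eq_clawGraph] at hf
  rw [mem_adjEigenspace_cdc, CG'_eq_clawGraph]
  intro v b
  rw [← hf]
  refine sum_clawGraph_adj_congr (f := fun w ↦ f (w, !b)) splitRotation_splitRotation_ne
    add_one_add_one_ne (fun m ↦ ?_) (fun m ↦ ?_) v
  · rcases splitRotation_eq_or m with h | h <;> simp [h, hinv]
  · rcases splitRotation_symm_eq_or m with h | h <;> simp [h, hinv, sub_eq_add_neg]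

theorem circuitSign_mem_adjEigenspace_cdc_CG' :
    (fun x ↦ circuitSign R n x.1) ∈ adjEigenspace (CDC (CG' n)) 2 := by
  have hrot (m) : circuitSign R n (.circ (splitRotation n m)) = circuitSign R n (.circ m) := by
    simp only [circuitSign, val_splitRotation_lt_iff]
  rw [CG'_eq_clawGraph, mem_adjEigenspace_cdc_of_antisymmetric splitRotation_splitRotation_ne
    splitRotation_add_halfShift fun v _ ↦ circuitSign_halfTurn v]
  intro m b
  rw [← hrot ((splitRotation n).symm m), Equiv.apply_symm_apply, hrot, two_mul]

theorem circuitSign_notMem_adjEigenspace_cdc_CG [Nontrivial R] (heven : Even n) :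
    (fun x ↦ circuitSign R n x.1) ∉ adjEigenspace (CDC (CG n)) 2 := by
  intro h
  have h0 := apply_halfTurn_of_mem_adjEigenspace_cdc_CG heven h (.circ 0) true
  simp only [circuitSign_halfTurn] at h0
  have h1 := self_eq_neg.1 h0.symm
  simp [circuitSign, NeZero.pos n] at h1

theorem adjEigenspace_cdc_CG_lt [Nontrivial R] (heven : Even n) :
    adjEigenspace (CDC (CG n)) (2 : R) < adjEigenspace (CDC (CG' n)) 2 :=
  (adjEigenspace_cdc_CG_le heven).lt_of_not_ge fun h ↦
    circuitSign_notMem_adjEigenspace_cdc_CG heven (h circuitSign_mem_adjEigenspace_cdc_CG')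

theorem isEmpty_cdc_CG_iso_cdc_CG' (heven : Even n) : IsEmpty (CDC (CG n) ≃g CDC (CG' n)) :=
  ⟨fun e ↦ (Submodule.finrank_lt_finrank_of_lt (adjEigenspace_cdc_CG_lt (R := ℝ) heven)).ne
    (finrank_adjEigenspace_congr e)⟩

end Spectrum

/-- For even `n ≥ 2`, the canonical double covers of `CG(n)` and `CG'(n)` are
not isomorphic; equivalently, `CG(n)` and `CG'(n)` are not TF-isomorphic. -/
theorem claw_cdc_not_iso_of_even (n : ℕ) (hn : 2 ≤ n) (heven : Even n) :
    IsEmpty (CDC (CG n) ≃g CDC (CG' n)) ∧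
    ¬ (∃ α β : ClawVert n ≃ ClawVert n,
        ∀ x y : ClawVert n, (CG' n).Adj x y ↔ (CG n).Adj (α x) (β y)) := by
  have : NeZero n := ⟨by omega⟩
  have hiso := isEmpty_cdc_CG_iso_cdc_CG' heven
  exact ⟨hiso, fun ⟨α, β, h⟩ ↦ hiso.false (cdcIsoOfTwoFold α β h).symm⟩
end

section
/- For every odd natural number n ≥ 1, there exists a non-trivial TF-isomorphism (α, β) from the companion CG'(n) to the claw graph CG(n) (bijections of the common vertex set with: x, y adjacent in CG'(n) iff α(x), β(y) adjacent in CG(n), and α ≠ β) such that every claw vertex is a pin, i.e., α and β both fix every centre c_i and every leaf ℓ_{i,j}, and each circuit vertex u_m is sent by each of α and β to either u_m or u_{m + 3n} (indices in ZMod (6n)). In particular, for odd n the graphs CG(n) and CG'(n) are TF-isomorphic. -/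
/-!
Let `N = 3n`. Besides its residue mod `N`, an index `m < 2N` carries two bits: its *sheet* `m / N`
and, since `N` is odd, its *parity*, which together with the residue determines `m` by the Chinese
remainder theorem. In the coordinates (sheet, residue) the two `N`-cycles step by `(0, 1)`; in the
coordinates (parity, residue) the `2N`-cycle steps by `(1, 1)`. So let `α` and `β` turn the sheet
`s` into the parity `s` and `s + 1` respectively, keeping the residue: a step from `α x` to `β y`,
or from `β y` to `α x`, is then a step between `x` and `y` within one sheet. Antipodal indices are
those with equal residues, so the claw edges are preserved too.
-/

section TwoSheets

theorem val_div_lt_two {M N : ℕ} [NeZero N] (hM : M = 2 * N) (m : ZMod M) : m.val / N < 2 := by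
  subst hM
  exact Nat.div_lt_of_lt_mul ((ZMod.val_lt m).trans_eq (mul_comm 2 N))

variable {M N : ℕ} (hM : M = 2 * N)

/-- The Chinese remainder coordinates (parity, residue) on the `2N`-cycle, for odd `N`. The modulus
is a variable `M` equal to `2 * N` because it occurs as `6 * n`, with `N = 3 * n`. -/
def parityResidue (hN : Odd N) : ZMod M ≃+* ZMod 2 × ZMod N :=
  (ZMod.ringEquivCongr hM).trans (ZMod.chineseRemainder (Nat.coprime_two_left.mpr hN))

/-- The coordinates `(s, a)` of an index `s * N + a` with `a < N`: `s` is the sheet, that is, which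
of the two `N`-cycles the index belongs to, and `a` its position there. -/
def sheetResidue [NeZero N] : ZMod M ≃ ZMod 2 × ZMod N where
  toFun m := ((m.val / N : ℕ), (m.val : ℕ))
  invFun p := (p.2.val + N * p.1.val : ℕ)
  left_inv m := by
    subst hM
    simp only [ZMod.val_natCast, Nat.mod_eq_of_lt (val_div_lt_two rfl m), Nat.mod_add_div,
      ZMod.natCast_zmod_val]
  right_inv p := by
    have index_lt : p.2.val + N * p.1.val < M := by
      have position_lt : p.2.val < N := ZMod.val_lt p.2
      have offset_le : N * p.1.val ≤ N * 1 :=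
        Nat.mul_le_mul_left N (Nat.le_of_lt_succ (ZMod.val_lt p.1))
      omega
    beta_reduce
    rw [ZMod.val_natCast_of_lt index_lt, Nat.add_mul_div_left _ _ (NeZero.pos N),
      Nat.div_eq_of_lt (ZMod.val_lt p.2)]
    simp only [zero_add, Nat.cast_add, Nat.cast_mul, ZMod.natCast_self, zero_mul, add_zero,
      ZMod.natCast_zmod_val]

theorem sheetResidue_apply [NeZero N] (m : ZMod M) :
    sheetResidue hM m = (((m.val / N : ℕ) : ZMod 2), ((m.val : ℕ) : ZMod N)) :=
  rfl

theorem sheetResidue_eq_add_iff [NeZero N] {m m' : ZMod M} :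
    sheetResidue hM m' = sheetResidue hM m + (0, 1) ↔
      m.val / N = m'.val / N ∧ m'.val % N = (m.val % N + 1) % N := by
  have residue_step : (m'.val : ZMod N) = m.val + 1 ↔ m'.val % N = (m.val % N + 1) % N := by
    rw [Nat.mod_add_mod, ← ZMod.natCast_eq_natCast_iff', Nat.cast_add_one]
  have same_sheet : ((m'.val / N : ℕ) : ZMod 2) = (m.val / N : ℕ) ↔ m.val / N = m'.val / N := by
    rw [ZMod.natCast_eq_natCast_iff', Nat.mod_eq_of_lt (val_div_lt_two hM m),
      Nat.mod_eq_of_lt (val_div_lt_two hM m'), eq_comm]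
  rw [sheetResidue_apply, sheetResidue_apply, Prod.mk_add_mk, add_zero, Prod.mk_inj, same_sheet,
    residue_step]

variable (hN : Odd N)

theorem parityResidue_snd [NeZero N] (m : ZMod M) :
    (parityResidue hM hN m).2 = (sheetResidue hM m).2 := by
  subst hM
  conv_lhs => rw [← ZMod.natCast_zmod_val m, map_natCast]
  rfl

theorem parityResidue_half : parityResidue hM hN (N : ZMod M) = (1, 0) := by
  rw [map_natCast]
  exact Prod.ext (ZMod.natCast_eq_one_iff_odd.mpr hN) (ZMod.natCast_self N)

theorem parityResidue_snd_eq_snd_iff {m c : ZMod M} :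
    (parityResidue hM hN m).2 = (parityResidue hM hN c).2 ↔ m = c ∨ m = c + (N : ZMod M) := by
  have parity_cases : ∀ a b : ZMod 2, a = b ∨ a = b + 1 := by decide
  have coordinates_iff {a b : ZMod M} := (parityResidue hM hN).injective.eq_iff (a := a) (b := b)
  rw [← coordinates_iff, ← coordinates_iff, map_add, parityResidue_half, Prod.ext_iff, Prod.ext_iff,
    Prod.fst_add, Prod.snd_add, add_zero, ← or_and_right, and_iff_right (parity_cases _ _)]

variable [NeZero N]

/-- The permutation of the `2N`-cycle that keeps residues and turns the sheet `s` into the parity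
`s + ε`. The two halves of the TF-isomorphism are the cases `ε = 0` and `ε = 1`. -/
def sheetToParity (ε : ZMod 2) : Equiv.Perm (ZMod M) :=
  ((sheetResidue hM).trans (Equiv.addRight (ε, 0))).trans (parityResidue hM hN).symm.toEquiv

theorem parityResidue_sheetToParity (ε : ZMod 2) (m : ZMod M) :
    parityResidue hM hN (sheetToParity hM hN ε m) = sheetResidue hM m + (ε, 0) :=
  (parityResidue hM hN).apply_symm_apply _

theorem parityResidue_sheetToParity_snd (ε : ZMod 2) (m : ZMod M) :
    (parityResidue hM hN (sheetToParity hM hN ε m)).2 = (parityResidue hM hN m).2 := by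
  rw [parityResidue_sheetToParity, Prod.snd_add, add_zero, parityResidue_snd]

theorem sheetToParity_eq_self_or_eq_add_half (ε : ZMod 2) (m : ZMod M) :
    sheetToParity hM hN ε m = m ∨ sheetToParity hM hN ε m = m + (N : ZMod M) :=
  (parityResidue_snd_eq_snd_iff hM hN).mp (parityResidue_sheetToParity_snd hM hN ε m)

theorem sheetToParity_eq_or_eq_add_half_iff (ε : ZMod 2) {m c : ZMod M} :
    (sheetToParity hM hN ε m = c ∨ sheetToParity hM hN ε m = c + (N : ZMod M)) ↔
      m = c ∨ m = c + (N : ZMod M) := by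
  rw [← parityResidue_snd_eq_snd_iff hM hN, ← parityResidue_snd_eq_snd_iff hM hN,
    parityResidue_sheetToParity_snd]

theorem sheetToParity_eq_add_one_iff (ε : ZMod 2) {m m' : ZMod M} :
    sheetToParity hM hN (ε + 1) m' = sheetToParity hM hN ε m + 1 ↔
      sheetResidue hM m' = sheetResidue hM m + (0, 1) := by
  have step_split : ((ε, 0) : ZMod 2 × ZMod N) + 1 = (0, 1) + (ε + 1, 0) := by ext <;> simp
  rw [← (parityResidue hM hN).injective.eq_iff, map_add, map_one, parityResidue_sheetToParity,
    parityResidue_sheetToParity, add_assoc, step_split, ← add_assoc, add_left_inj]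

theorem sheetToParity_injective : Function.Injective (sheetToParity hM hN) := by
  intro ε δ h
  have coordinates := congrArg (fun σ => parityResidue hM hN (σ 0)) h
  simp only [parityResidue_sheetToParity, add_right_inj] at coordinates
  exact congrArg Prod.fst coordinates

end TwoSheets

theorem fromRel_adj_of_irrefl {V : Type*} {r : V → V → Prop} (hr : ∀ x, ¬ r x x) {x y : V} :
    (SimpleGraph.fromRel r).Adj x y ↔ r x y ∨ r y x := by
  rw [SimpleGraph.fromRel_adj, and_iff_right_iff_imp]
  rintro (h | h) rfl <;> exact hr _ h

section ClawGraph

theorem six_mul_eq_two_mul (n : ℕ) : 6 * n = 2 * (3 * n) := by ring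

variable {n : ℕ}

/-- The permutation of the vertices that acts on the circuit by `σ` and fixes every claw. -/
def ClawVert.extendCircuit (σ : Equiv.Perm (ZMod (6 * n))) : Equiv.Perm (ClawVert n) where
  toFun
    | .circ m => .circ (σ m)
    | .leaf i j => .leaf i j
    | .centre i => .centre i
  invFun
    | .circ m => .circ (σ.symm m)
    | .leaf i j => .leaf i j
    | .centre i => .centre i
  left_inv x := by cases x <;> simp
  right_inv x := by cases x <;> simp

theorem ClawVert.extendCircuit_injective :
    Function.Injective (extendCircuit : Equiv.Perm (ZMod (6 * n)) → Equiv.Perm (ClawVert n)) :=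
  fun _ _ h => Equiv.ext fun m => circ.inj (DFunLike.congr_fun h (circ m))

variable [NeZero n]

theorem cgRel_irrefl (x : ClawVert n) : ¬ cgRel n x x := by
  have : Fact (1 < 6 * n) := ⟨by have := NeZero.pos n; omega⟩
  cases x <;> simp [cgRel]

theorem cgRel'_circ_iff {m m' : ZMod (6 * n)} :
    cgRel' n (.circ m) (.circ m') ↔
      sheetResidue (six_mul_eq_two_mul n) m' = sheetResidue (six_mul_eq_two_mul n) m + (0, 1) :=
  (sheetResidue_eq_add_iff (six_mul_eq_two_mul n)).symm

theorem cgRel'_irrefl (x : ClawVert n) : ¬ cgRel' n x x := by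
  have : Fact (1 < 3 * n) := ⟨by have := NeZero.pos n; omega⟩
  cases x with
  | circ m => simp [cgRel'_circ_iff]
  | leaf i j => exact id
  | centre i => exact id

/-- The extension of `sheetToParity` to the claw graph: `α` is the case `ε = 0` and `β` the case
`ε = 1`. -/
def clawTwist (hodd : Odd n) (ε : ZMod 2) : Equiv.Perm (ClawVert n) :=
  ClawVert.extendCircuit (sheetToParity (six_mul_eq_two_mul n) (Odd.mul (by decide) hodd) ε)

theorem clawTwist_injective (hodd : Odd n) : Function.Injective (clawTwist hodd) :=
  ClawVert.extendCircuit_injective.comp (sheetToParity_injective _ _)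

theorem clawTwist_circ_eq_or (hodd : Odd n) (ε : ZMod 2) (m : ZMod (6 * n)) :
    clawTwist hodd ε (.circ m) = .circ m ∨
      clawTwist hodd ε (.circ m) = .circ (m + ((3 * n : ℕ) : ZMod (6 * n))) :=
  (sheetToParity_eq_self_or_eq_add_half _ _ ε m).imp
    (congrArg ClawVert.circ) (congrArg ClawVert.circ)

theorem cgRel_clawTwist_iff (hodd : Odd n) (ε : ZMod 2) (x y : ClawVert n) :
    cgRel n (clawTwist hodd ε x) (clawTwist hodd (ε + 1) y) ↔ cgRel' n x y := by
  rcases x with m | ⟨i, j⟩ | i <;> rcases y with m' | ⟨i', j'⟩ | i'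
  case circ.circ =>
    exact (sheetToParity_eq_add_one_iff _ _ ε).trans cgRel'_circ_iff.symm
  case leaf.circ => exact sheetToParity_eq_or_eq_add_half_iff _ _ (ε + 1)
  all_goals rfl

theorem CG'_adj_iff_CG_adj_clawTwist (hodd : Odd n) (x y : ClawVert n) :
    (CG' n).Adj x y ↔ (CG n).Adj (clawTwist hodd 0 x) (clawTwist hodd 1 y) := by
  rw [CG, CG', fromRel_adj_of_irrefl cgRel_irrefl, fromRel_adj_of_irrefl cgRel'_irrefl]
  -- For the reversed edge, `ε = 1` and `ε + 1` reduces to `0` in `ZMod 2`.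
  exact (or_congr (cgRel_clawTwist_iff hodd 0 x y) (cgRel_clawTwist_iff hodd 1 y x)).symm

end ClawGraph

/-- For odd `n ≥ 1`, there is a non-trivial TF-isomorphism `(α, β)` from
`CG'(n)` to `CG(n)` in which every claw vertex (centre or leaf) is a pin and
each circuit vertex `u_m` is sent by each of `α`, `β` to `u_m` or `u_{m+3n}`.
In particular `CG(n)` and `CG'(n)` are TF-isomorphic for odd `n`. -/
theorem claw_tf_isomorphism_of_odd (n : ℕ) (hn : 1 ≤ n) (hodd : Odd n) :
    ∃ α β : ClawVert n ≃ ClawVert n,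
      (∀ x y : ClawVert n, (CG' n).Adj x y ↔ (CG n).Adj (α x) (β y)) ∧
      α ≠ β ∧
      (∀ i : Fin n, α (.centre i) = .centre i ∧ β (.centre i) = .centre i) ∧
      (∀ (i : Fin n) (j : Fin 3), α (.leaf i j) = .leaf i j ∧ β (.leaf i j) = .leaf i j) ∧
      (∀ m : ZMod (6 * n),
        (α (.circ m) = .circ m ∨ α (.circ m) = .circ (m + ((3 * n : ℕ) : ZMod (6 * n)))) ∧
        (β (.circ m) = .circ m ∨ β (.circ m) = .circ (m + ((3 * n : ℕ) : ZMod (6 * n))))) := by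
  have : NeZero n := ⟨by omega⟩
  exact ⟨clawTwist hodd 0, clawTwist hodd 1, CG'_adj_iff_CG_adj_clawTwist hodd,
    (clawTwist_injective hodd).ne zero_ne_one, fun _ => ⟨rfl, rfl⟩, fun _ _ => ⟨rfl, rfl⟩,
    fun m => ⟨clawTwist_circ_eq_or hodd 0 m, clawTwist_circ_eq_or hodd 1 m⟩⟩
end
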